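/- Let P be a d-dimensional isotropic simplicial polytope that is a local extremum (with respect to the Hausdorff metric on the space of d-dimensional convex bodies) of the functional K ↦ L_K. Then P is isohedral: for any two facets F₁ and F₂ of P there exists an isometry of ℝ^d mapping P onto itself and mapping F₁ onto F₂. In particular, all facets of P are congruent. -/

import Mathlib

open MeasureTheory Finset
open scoped ProbabilityTheory
open scoped RealInnerProductSpace

noncomputable section

abbrev Euc (d : ℕ) := EuclideanSpace ℝ (Fin d)

section GeneralSpace

variable {V : Type*} [NormedAddCommGroup V] [NormedSpace ℝ V]

/-- The dimension of a set: the rank of the direction of its affine span. -/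
noncomputable def sdim (F : Set V) : ℕ := Module.finrank ℝ (affineSpan ℝ F).direction

/-- `F` is a simplex with `n` vertices (an `(n-1)`-dimensional simplex). -/
def IsSimplexWith (n : ℕ) (F : Set V) : Prop :=
  ∃ w : Fin n → V, AffineIndependent ℝ w ∧ F = convexHull ℝ (Set.range w)

/-- A polytope is the convex hull of finitely many points. -/
def IsPolytope (P : Set V) : Prop := ∃ S : Finset V, P = convexHull ℝ (S : Set V)

/-- A facet of a `d`-dimensional polytope: an exposed face of dimension `d - 1`. -/
def IsFacetOf (d : ℕ) (P F : Set V) : Prop := IsExposed ℝ P F ∧ sdim F = d - 1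

/-- A `d`-dimensional simplicial polytope: a polytope of dimension `d`, each facet of which
is a `(d-1)`-dimensional simplex (i.e. has `d` affinely independent vertices). -/
def IsSimplicialPolytope (d : ℕ) (P : Set V) : Prop :=
  IsPolytope P ∧ sdim P = d ∧ ∀ F : Set V, IsFacetOf d P F → IsSimplexWith d F

end GeneralSpace

/-- A convex body: compact, convex, with nonempty interior. -/
def IsConvexBody {d : ℕ} (K : Set (Euc d)) : Prop :=
  IsCompact K ∧ Convex ℝ K ∧ (interior K).Nonempty

/-- The barycenter `μ_K` of the uniform distribution on `K`. -/
noncomputable def centroid {d : ℕ} (K : Set (Euc d)) : Euc d :=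
  (volume K).toReal⁻¹ • ∫ x in K, x

/-- The covariance matrix `A(K)` of the uniform distribution on `K`. -/
noncomputable def covMatrix {d : ℕ} (K : Set (Euc d)) : Matrix (Fin d) (Fin d) ℝ :=
  Matrix.of fun i j =>
    (volume K).toReal⁻¹ * ∫ x in K, (x i - centroid K i) * (x j - centroid K j)

/-- The isotropic constant `L_K`, defined by `L_K ^ (2d) = det A(K) / vol(K) ^ 2`. -/
noncomputable def isoConst {d : ℕ} (K : Set (Euc d)) : ℝ :=
  ((covMatrix K).det / (volume K).toReal ^ 2) ^ ((2 * (d : ℝ))⁻¹)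

/-- `K` is isotropic: its barycenter is the origin and its covariance matrix is the identity. -/
def IsIsotropic {d : ℕ} (K : Set (Euc d)) : Prop :=
  centroid K = 0 ∧ covMatrix K = 1

/-- `P` is a local extremum (local maximum or local minimum) of `K ↦ L_K` among convex bodies,
with respect to the Hausdorff metric. -/
def IsLocalExtremumOfIsoConst {d : ℕ} (P : Set (Euc d)) : Prop :=
  (∃ ε > 0, ∀ K : Set (Euc d), IsConvexBody K →
      Metric.hausdorffDist K P < ε → isoConst K ≤ isoConst P) ∨
  (∃ ε > 0, ∀ K : Set (Euc d), IsConvexBody K →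
      Metric.hausdorffDist K P < ε → isoConst P ≤ isoConst K)

/-- The polar angle of `(a, b) ∈ ℝ²`, normalized to lie in `[-π, π)`. -/
noncomputable def polarAngle (a b : ℝ) : ℝ :=
  if Complex.arg ⟨a, b⟩ = Real.pi then -Real.pi else Complex.arg ⟨a, b⟩

/-- The affine map `x ↦ x + (f x + c) • w`. -/
def affineShear {d : ℕ} (f : Euc d →ₗ[ℝ] ℝ) (c : ℝ) (w x : Euc d) : Euc d := x + (f x + c) • w

lemma affineShear_injective {d : ℕ} (f : Euc d →ₗ[ℝ] ℝ) (c : ℝ) (w : Euc d)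
    (h : 1 + f w ≠ 0) : Function.Injective (affineShear f c w) := by
  intro x y hxy
  have h1 : f x = f y := by
    have h2 := congrArg f hxy
    simp only [affineShear, map_add, map_smul, smul_eq_mul] at h2
    have h3 : (1 + f w) * (f x - f y) = 0 := by linarith
    rcases mul_eq_zero.1 h3 with h4 | h4
    · exact absurd h4 h
    · linarith
  simpa [affineShear, h1] using hxy

lemma setIntegral_image_affineShear {d : ℕ} (f : Euc d →ₗ[ℝ] ℝ) (c : ℝ) (w : Euc d)
    (h : 1 + f w ≠ 0) {S : Set (Euc d)} (hS : MeasurableSet S) (φ : Euc d → ℝ) :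
    ∫ x in affineShear f c w '' S, φ x = |1 + f w| * ∫ x in S, φ (affineShear f c w x) := by
  have hd : ∀ x ∈ S, HasFDerivWithinAt (affineShear f c w)
      (ContinuousLinearMap.id ℝ (Euc d) + (LinearMap.toContinuousLinearMap f).smulRight w) S x := by
    intro x _
    have h1 : HasFDerivAt (fun x => f x + c) (LinearMap.toContinuousLinearMap f) x :=
      ((LinearMap.toContinuousLinearMap f).hasFDerivAt).add_const c
    exact ((hasFDerivAt_id x).add (h1.smul_const w)).hasFDerivWithinAt
  have hdet : (ContinuousLinearMap.id ℝ (Euc d) +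
      (LinearMap.toContinuousLinearMap f).smulRight w).det = 1 + f w := by
    rw [← LinearMap.transvection.det f w, ContinuousLinearMap.det]
    congr 1
  rw [integral_image_eq_integral_abs_det_fderiv_smul volume hS hd
    (affineShear_injective f c w h).injOn, hdet]
  simp only [smul_eq_mul]
  exact integral_const_mul _ _

lemma volume_setOf_eq_eq_zero {d : ℕ} {f : Euc d →ₗ[ℝ] ℝ} (hf : f ≠ 0) (c : ℝ) :
    volume {x | f x = c} = 0 := by
  by_cases hne : ∃ p, f p = c
  · obtain ⟨p, hp⟩ := hne
    have : {x | f x = c} = (AffineSubspace.mk' p (LinearMap.ker f) : Set (Euc d)) := by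
      ext x
      simp [AffineSubspace.mem_mk', sub_eq_zero, hp]
    rw [this]
    refine Measure.addHaar_affineSubspace _ _ fun htop => hf ?_
    have := congrArg AffineSubspace.direction htop
    rw [AffineSubspace.direction_mk', AffineSubspace.direction_top] at this
    exact LinearMap.ker_eq_top.1 this
  · have : {x | f x = c} = ∅ := by
      ext x
      simpa using fun h => hne ⟨x, h⟩
    rw [this, measure_empty]

/-- The sum of the coordinates with respect to a basis. -/
def coordSum {d : ℕ} (b : Module.Basis (Fin d) ℝ (Euc d)) : Euc d →ₗ[ℝ] ℝ := ∑ j, b.coord j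

lemma coordSum_apply {d : ℕ} (b : Module.Basis (Fin d) ℝ (Euc d)) (x : Euc d) :
    coordSum b x = ∑ j, b.coord j x := by simp [coordSum]

@[simp]
lemma coordSum_basis {d : ℕ} (b : Module.Basis (Fin d) ℝ (Euc d)) (j : Fin d) :
    coordSum b (b j) = 1 := by
  classical
  simp [coordSum_apply, Finsupp.single_apply]

/-- Barycentric coordinates on the simplex spanned by the origin (index `none`) and a basis. -/
def bary {d : ℕ} (b : Module.Basis (Fin d) ℝ (Euc d)) : Option (Fin d) → Euc d → ℝ
  | none, x => 1 - coordSum b x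
  | some j, x => b.coord j x

/-- The simplex spanned by the origin and a basis. -/
def cornerSimplex {d : ℕ} (b : Module.Basis (Fin d) ℝ (Euc d)) : Set (Euc d) :=
  {x | ∀ o, 0 ≤ bary b o x}

lemma mem_cornerSimplex {d : ℕ} {b : Module.Basis (Fin d) ℝ (Euc d)} {x : Euc d} :
    x ∈ cornerSimplex b ↔ (∀ j, 0 ≤ b.coord j x) ∧ coordSum b x ≤ 1 := by
  simp only [cornerSimplex, Set.mem_ofPred_eq, Option.forall, bary, sub_nonneg]
  exact and_comm

lemma sum_coord_smul {d : ℕ} (b : Module.Basis (Fin d) ℝ (Euc d)) (x : Euc d) :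
    ∑ j, b.coord j x • b j = x := by simp

lemma sum_bary {d : ℕ} (b : Module.Basis (Fin d) ℝ (Euc d)) (x : Euc d) :
    ∑ o, bary b o x = 1 := by
  simp [Fintype.sum_option, bary, coordSum_apply]

lemma continuous_linearMap {d : ℕ} (f : Euc d →ₗ[ℝ] ℝ) : Continuous f :=
  f.continuous_of_finiteDimensional

lemma continuous_bary {d : ℕ} (b : Module.Basis (Fin d) ℝ (Euc d)) (o : Option (Fin d)) :
    Continuous (bary b o) := by
  cases o with
  | none => exact continuous_const.sub (continuous_linearMap _)
  | some j => exact continuous_linearMap _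

lemma isCompact_cornerSimplex {d : ℕ} (b : Module.Basis (Fin d) ℝ (Euc d)) :
    IsCompact (cornerSimplex b) := by
  have hc : Continuous fun a : Fin d → ℝ => ∑ j, a j • b j := by fun_prop
  refine (((isCompact_univ_pi fun _ : Fin d => isCompact_Icc (a := (0 : ℝ)) (b := 1))).image
    hc).of_isClosed_subset ?_ ?_
  · simp only [cornerSimplex, Set.ofPred_forall]
    exact isClosed_iInter fun o => isClosed_le continuous_const (continuous_bary b o)
  · intro x hx
    rw [mem_cornerSimplex] at hx
    refine ⟨fun j => b.coord j x, fun j _ => ⟨hx.1 j, ?_⟩, sum_coord_smul b x⟩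
    exact (Finset.single_le_sum (f := fun j => b.coord j x) (fun k _ => hx.1 k)
      (Finset.mem_univ j)).trans (by rw [← coordSum_apply]; exact hx.2)

lemma continuous_affineShear {d : ℕ} (f : Euc d →ₗ[ℝ] ℝ) (c : ℝ) (w : Euc d) :
    Continuous (affineShear f c w) :=
  continuous_id.add (((continuous_linearMap f).add continuous_const).smul continuous_const)

lemma setIntegral_comp_involutive_affineShear {d : ℕ} {b : Module.Basis (Fin d) ℝ (Euc d)}
    {f : Euc d →ₗ[ℝ] ℝ} {c : ℝ} {w : Euc d} {σ : Equiv.Perm (Option (Fin d))}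
    (h : 1 + f w = -1) (hσ : ∀ o, σ (σ o) = o)
    (hs : ∀ o x, bary b o (affineShear f c w x) = bary b (σ o) x) (φ : Euc d → ℝ) :
    ∫ x in cornerSimplex b, φ (affineShear f c w x) = ∫ x in cornerSimplex b, φ x := by
  have himg : affineShear f c w '' cornerSimplex b = cornerSimplex b := by
    have hmem : ∀ x ∈ cornerSimplex b, affineShear f c w x ∈ cornerSimplex b :=
      fun x hx o => by rw [hs]; exact hx _
    refine Set.Subset.antisymm (Set.image_subset_iff.2 hmem) fun x hx => ⟨_, hmem x hx, ?_⟩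
    refine b.ext_elem fun j => ?_
    have := (hs (some j) (affineShear f c w x)).trans (hs _ x)
    rw [hσ] at this
    exact this
  have := setIntegral_image_affineShear f c w (by rw [h]; norm_num)
    (isCompact_cornerSimplex b).measurableSet φ
  rw [himg, h] at this
  simpa using this.symm

lemma exists_affineShear_swap {d : ℕ} (b : Module.Basis (Fin d) ℝ (Euc d))
    (o : Option (Fin d)) (j : Fin d) (ho : o ≠ some j) :
    ∃ (f : Euc d →ₗ[ℝ] ℝ) (c : ℝ) (w : Euc d), 1 + f w = -1 ∧
      ∀ p x, bary b p (affineShear f c w x) = bary b (Equiv.swap o (some j) p) x := by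
  cases o with
  | none =>
    refine ⟨-(coordSum b + b.coord j), 1, b j, by simp, fun p x => ?_⟩
    rcases eq_or_ne p none with rfl | hp
    · simp [bary, affineShear]; ring
    rcases eq_or_ne p (some j) with rfl | hp'
    · simp [bary, affineShear]; ring
    · rw [Equiv.swap_apply_of_ne_of_ne hp hp']
      obtain ⟨k, rfl⟩ := Option.ne_none_iff_exists'.1 hp
      have : j ≠ k := fun h => hp' (by rw [h])
      simp [bary, affineShear, this]
  | some i =>
    have hij : i ≠ j := fun h => ho (by rw [h])
    refine ⟨b.coord j - b.coord i, 0, b i - b j, by simp [hij, hij.symm],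
      fun p x => ?_⟩
    rcases eq_or_ne p (some i) with rfl | hp
    · simp [bary, affineShear, hij]
    rcases eq_or_ne p (some j) with rfl | hp'
    · simp [bary, affineShear, hij.symm]
    · rw [Equiv.swap_apply_of_ne_of_ne hp hp']
      cases p with
      | none => simp [bary, affineShear]
      | some k =>
        have h1 : i ≠ k := fun h => hp (by rw [h])
        have h2 : j ≠ k := fun h => hp' (by rw [h])
        simp [bary, affineShear, h1, h2]

lemma integrableOn_cornerSimplex {d : ℕ} (b : Module.Basis (Fin d) ℝ (Euc d))
    {φ : Euc d → ℝ} (hφ : Continuous φ) : IntegrableOn φ (cornerSimplex b) :=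
  hφ.continuousOn.integrableOn_compact (isCompact_cornerSimplex b)

/-- Second moments of barycentric coordinates on the simplex. -/
def baryMoment {d : ℕ} (b : Module.Basis (Fin d) ℝ (Euc d)) (o p : Option (Fin d)) : ℝ :=
  ∫ x in cornerSimplex b, bary b o x * bary b p x

lemma baryMoment_swap {d : ℕ} (b : Module.Basis (Fin d) ℝ (Euc d))
    (o : Option (Fin d)) (j : Fin d) (ho : o ≠ some j) (p r : Option (Fin d)) :
    baryMoment b (Equiv.swap o (some j) p) (Equiv.swap o (some j) r) = baryMoment b p r := by
  obtain ⟨f, c, w, h, hs⟩ := exists_affineShear_swap b o j ho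
  have := setIntegral_comp_involutive_affineShear h (Equiv.swap_apply_self _ _) hs
    (fun x => bary b p x * bary b r x)
  simpa only [hs, baryMoment] using this

lemma baryMoment_comm {d : ℕ} (b : Module.Basis (Fin d) ℝ (Euc d)) (o p : Option (Fin d)) :
    baryMoment b o p = baryMoment b p o := by simp only [baryMoment, mul_comm]

lemma baryMoment_self_eq {d : ℕ} (b : Module.Basis (Fin d) ℝ (Euc d)) (o : Option (Fin d))
    (j : Fin d) : baryMoment b o o = baryMoment b (some j) (some j) := by
  rcases eq_or_ne o (some j) with rfl | ho
  · rfl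
  · simpa using (baryMoment_swap b o j ho o o).symm

/-- Halving the simplex along an edge relates the two kinds of second moments. -/
lemma baryMoment_some_some {d : ℕ} (b : Module.Basis (Fin d) ℝ (Euc d)) {i j : Fin d}
    (hij : i ≠ j) :
    baryMoment b (some i) (some i) = 2 * baryMoment b (some i) (some j) := by
  set Δ := cornerSimplex b with hΔ
  set H := {x ∈ Δ | b.coord j x ≤ b.coord i x} with hH
  set H' := {x ∈ Δ | b.coord i x ≤ b.coord j x} with hH'
  have hΔm : MeasurableSet Δ := (isCompact_cornerSimplex b).measurableSet
  have hHm : MeasurableSet H := hΔm.inter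
    (isClosed_le (continuous_linearMap (b.coord j)) (continuous_linearMap (b.coord i))).measurableSet
  have hHm' : MeasurableSet H' := hΔm.inter
    (isClosed_le (continuous_linearMap (b.coord i)) (continuous_linearMap (b.coord j))).measurableSet
  let φ : Euc d → ℝ := fun x => (b.coord i x - b.coord j x) ^ 2
  have hφ : Continuous φ :=
    ((continuous_linearMap (b.coord i)).sub (continuous_linearMap (b.coord j))).pow 2
  have hunion : Δ = H ∪ H' := by
    ext x
    simp only [hH, hH', Set.mem_union, Set.mem_ofPred_eq, ← and_or_left]
    exact ⟨fun h => ⟨h, le_total _ _⟩, fun h => h.1⟩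
  have hdisj : AEDisjoint volume H H' := by
    have hne : b.coord i - b.coord j ≠ 0 := fun h => by
      have := LinearMap.congr_fun h (b i)
      simp [hij] at this
    refine measure_mono_null (fun x hx => ?_) (volume_setOf_eq_eq_zero hne 0)
    simp only [Set.mem_ofPred_eq, LinearMap.sub_apply]
    linarith [hx.1.2, hx.2.2]
  have hint : ∫ x in Δ, φ x = (∫ x in H, φ x) + ∫ x in H', φ x := by
    have hi := integrableOn_cornerSimplex b hφ
    rw [← setIntegral_union₀ hdisj hHm'.nullMeasurableSet (hi.mono_set (Set.sep_subset _ _))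
      (hi.mono_set (Set.sep_subset _ _)), ← hunion]
  have hswap : ∫ x in H', φ x = ∫ x in H, φ x := by
    obtain ⟨f, c, w, h, hs⟩ := exists_affineShear_swap b (some i) j (by simpa using hij)
    have e1 : ∀ x, b.coord i (affineShear f c w x) = b.coord j x := fun x => by
      simpa [bary] using hs (some i) x
    have e2 : ∀ x, b.coord j (affineShear f c w x) = b.coord i x := fun x => by
      simpa [bary] using hs (some j) x
    have hΔs : ∀ x, affineShear f c w x ∈ Δ ↔ x ∈ Δ := fun x => by
      simp only [hΔ, cornerSimplex, Set.mem_ofPred_eq, hs]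
      exact (Equiv.swap (some i) (some j)).forall_congr_right (q := fun p => 0 ≤ bary b p x)
    have himg : affineShear f c w '' H = H' := by
      ext y
      constructor
      · rintro ⟨x, hx, rfl⟩
        exact ⟨(hΔs x).2 hx.1, by rw [e1, e2]; exact hx.2⟩
      · intro hy
        refine ⟨affineShear f c w y, ⟨(hΔs y).2 hy.1, by rw [e1, e2]; exact hy.2⟩, ?_⟩
        refine b.ext_elem fun k => ?_
        have := (hs (some k) (affineShear f c w y)).trans (hs _ y)
        rw [Equiv.swap_apply_self] at this
        exact this
    rw [← himg, setIntegral_image_affineShear f c w (by rw [h]; norm_num) hHm, h]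
    simp only [φ, e1, e2, abs_neg, abs_one, one_mul]
    congr 1 with x
    ring
  have hhalf : ∫ x in Δ, b.coord i x ^ 2 = 2 * ∫ x in H, φ x := by
    have e1 : ∀ x, b.coord i (affineShear (b.coord j) 0 (b j - b i) x)
        = b.coord i x - b.coord j x := fun x => by simp [affineShear, hij]; ring
    have e2 : ∀ x, b.coord j (affineShear (b.coord j) 0 (b j - b i) x)
        = 2 * b.coord j x := fun x => by simp [affineShear, hij]; ring
    have e3 : ∀ k, k ≠ i → k ≠ j → ∀ x, b.coord k (affineShear (b.coord j) 0 (b j - b i) x)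
        = b.coord k x := fun k h1 h2 x => by simp [affineShear, h1.symm, h2.symm]
    have e4 : ∀ x, coordSum b (affineShear (b.coord j) 0 (b j - b i) x) = coordSum b x :=
      fun x => by simp [affineShear]
    have hdet : 1 + b.coord j (b j - b i) = 2 := by simp [hij]; norm_num
    have himg : affineShear (b.coord j) 0 (b j - b i) '' H = Δ := by
      ext y
      constructor
      · rintro ⟨x, ⟨hx, hx'⟩, rfl⟩
        rw [hΔ, mem_cornerSimplex] at hx ⊢
        refine ⟨fun k => ?_, by rw [e4]; exact hx.2⟩
        rcases eq_or_ne k i with rfl | hk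
        · rw [e1]; linarith
        rcases eq_or_ne k j with rfl | hk'
        · rw [e2]; linarith [hx.1 k]
        · rw [e3 k hk hk']; exact hx.1 k
      · intro hy
        rw [hΔ, mem_cornerSimplex] at hy
        refine ⟨y - (b.coord j y / 2) • (b j - b i), ⟨?_, ?_⟩, ?_⟩
        · rw [hΔ, mem_cornerSimplex]
          refine ⟨fun k => ?_, by simpa using hy.2⟩
          have hk := hy.1 k
          have hj := hy.1 j
          rcases eq_or_ne k i with rfl | hk1
          · simp [hij] at *; linarith
          rcases eq_or_ne k j with rfl | hk2
          · simp [hij] at *; linarith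
          · simpa [hk1.symm, hk2.symm] using hk
        · have hi := hy.1 i
          simp [hij, hij.symm] at *; linarith
        · simp [affineShear, hij]
          module
    rw [← himg, setIntegral_image_affineShear _ _ _ (by rw [hdet]; norm_num) hHm, hdet]
    simp only [e1, φ, abs_two]
  have hexp : ∫ x in Δ, φ x = baryMoment b (some i) (some i) - 2 * baryMoment b (some i) (some j)
      + baryMoment b (some j) (some j) := by
    have hc : ∀ o p, IntegrableOn (fun x => bary b o x * bary b p x) Δ := fun o p =>
      integrableOn_cornerSimplex b ((continuous_bary b o).mul (continuous_bary b p))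
    simp only [baryMoment]
    have h1 := integral_sub (hc (some i) (some i)) ((hc (some i) (some j)).const_mul 2)
    have h2 := integral_add (((hc (some i) (some i)).sub ((hc (some i) (some j)).const_mul 2)))
      (hc (some j) (some j))
    rw [← integral_const_mul, ← h1]
    refine Eq.trans ?_ h2
    congr 1 with x
    simp only [bary, φ, Pi.sub_apply]
    ring
  have hii : baryMoment b (some i) (some i) = ∫ x in Δ, b.coord i x ^ 2 := by
    simp only [baryMoment, bary, sq, hΔ]
  have hjj := baryMoment_self_eq b (some j) i
  linarith

lemma exists_baryMoment_eq {d : ℕ} (hd : 2 ≤ d) (b : Module.Basis (Fin d) ℝ (Euc d)) :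
    ∃ β : ℝ, ∀ o p, baryMoment b o p = β * (1 + if o = p then 1 else 0) := by
  let z : Fin d := ⟨0, by omega⟩
  refine ⟨baryMoment b (some z) (some z) / 2, fun o p => ?_⟩
  have hoff : ∀ i j : Fin d, i ≠ j →
      baryMoment b (some i) (some j) = baryMoment b (some z) (some z) / 2 := fun i j hij => by
    rw [← baryMoment_self_eq b (some i) z, baryMoment_some_some b hij]; ring
  have hnone : ∀ j : Fin d, baryMoment b none (some j) = baryMoment b (some z) (some z) / 2 := by
    intro j
    obtain ⟨i, hij⟩ : ∃ i : Fin d, i ≠ j := by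
      have : Nontrivial (Fin d) := Fin.nontrivial_iff_two_le.2 hd
      exact exists_ne j
    have := baryMoment_swap b none i (by simp) none (some j)
    rw [Equiv.swap_apply_left, Equiv.swap_apply_of_ne_of_ne (by simp) (by simpa using hij.symm)]
      at this
    rw [← this, hoff i j hij]
  by_cases hop : o = p
  · subst hop
    rw [if_pos rfl, baryMoment_self_eq b o z]; ring
  · rw [if_neg hop, add_zero, mul_one]
    match o, p, hop with
    | none, none, h => exact absurd rfl h
    | none, some j, _ => exact hnone j
    | some j, none, _ => rw [baryMoment_comm]; exact hnone j
    | some i, some j, h => exact hoff i j fun e => h (by rw [e])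

lemma volume_cornerSimplex_pos {d : ℕ} (b : Module.Basis (Fin d) ℝ (Euc d)) :
    0 < volume.real (cornerSimplex b) := by
  have hopen : IsOpen {x | ∀ o, 0 < bary b o x} := by
    simp only [Set.ofPred_forall]
    exact isOpen_iInter_of_finite fun o => isOpen_lt continuous_const (continuous_bary b o)
  have hne : {x | ∀ o, 0 < bary b o x}.Nonempty := by
    refine ⟨∑ j, (1 / (d + 1) : ℝ) • b j, ?_⟩
    have h0 : (0 : ℝ) < d + 1 := by positivity
    rintro (_ | k)
    · simp only [bary, map_sum, map_smul, coordSum_basis, smul_eq_mul, mul_one, sum_const,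
        card_univ, Fintype.card_fin, nsmul_eq_mul, sub_pos]
      rw [mul_one_div, div_lt_one h0]
      linarith
    · simp [bary, Finsupp.single_apply]
      positivity
  refine ENNReal.toReal_pos ?_ (isCompact_cornerSimplex b).measure_lt_top.ne
  exact ((hopen.measure_pos volume hne).trans_le
    (measure_mono fun x hx o => (hx o).le)).ne'

/-- Volume and second moment of the image of the simplex with the origin moved to `q`. -/
lemma exists_simplex_moments {d : ℕ} (hd : 2 ≤ d) (b : Module.Basis (Fin d) ℝ (Euc d)) :
    ∃ β : ℝ, 0 < β ∧ volume.real (cornerSimplex b) = β * ((d + 1) * (d + 2)) ∧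
      ∀ q : Euc d, ∫ x in cornerSimplex b, ‖x + (1 - coordSum b x) • q‖ ^ 2 =
        β * (‖∑ j, b j + q‖ ^ 2 + (∑ j, ‖b j‖ ^ 2 + ‖q‖ ^ 2)) := by
  obtain ⟨β, hβ⟩ := exists_baryMoment_eq hd b
  have hc : ∀ o p, IntegrableOn (fun x => bary b o x * bary b p x) (cornerSimplex b) := fun o p =>
    integrableOn_cornerSimplex b ((continuous_bary b o).mul (continuous_bary b p))
  have key : ∀ g : Option (Fin d) → Option (Fin d) → ℝ,
      ∫ x in cornerSimplex b, ∑ o, ∑ p, bary b o x * bary b p x * g o p =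
        β * (∑ o, ∑ p, g o p + ∑ o, g o o) := by
    intro g
    rw [integral_finsetSum _ fun o _ => integrable_finsetSum _ fun p _ => (hc o p).mul_const _]
    simp_rw [integral_finsetSum _ fun p _ => (hc _ p).mul_const _, integral_mul_const]
    have : ∀ o p, ∫ x in cornerSimplex b, bary b o x * bary b p x
      = β * (1 + if o = p then 1 else 0) := hβ
    simp_rw [this, mul_add, add_mul, sum_add_distrib, mul_sum]
    simp
  have hvol : volume.real (cornerSimplex b) = β * ((d + 1) * (d + 2)) := by
    have h1 := key fun _ _ => 1
    have h2 : ∀ x, ∑ o, ∑ p, bary b o x * bary b p x * 1 = 1 := fun x => by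
      simp_rw [mul_one, ← mul_sum, sum_bary, mul_one, sum_bary]
    simp_rw [h2] at h1
    simp at h1
    rw [h1]; ring
  refine ⟨β, ?_, hvol, fun q => ?_⟩
  · have := volume_cornerSimplex_pos b
    rw [hvol] at this
    exact pos_of_mul_pos_left this (by positivity)
  · let u : Option (Fin d) → Euc d := fun o => o.elim q b
    have hx : ∀ x, x + (1 - coordSum b x) • q = ∑ o, bary b o x • u o := fun x => by
      rw [Fintype.sum_option, add_comm]
      simp only [bary, u, Option.elim]
      rw [sum_coord_smul]
    have hn : ∀ x, ‖x + (1 - coordSum b x) • q‖ ^ 2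
        = ∑ o, ∑ p, bary b o x * bary b p x * ⟪u o, u p⟫ := fun x => by
      rw [hx, ← real_inner_self_eq_norm_sq, sum_inner]
      simp_rw [inner_sum, real_inner_smul_left, real_inner_smul_right, mul_assoc]
    simp_rw [hn]
    rw [key]
    congr 2
    · rw [← real_inner_self_eq_norm_sq]
      have : ∑ j, b j + q = ∑ o, u o := by
        rw [Fintype.sum_option, add_comm]
        simp [u]
      rw [this, sum_inner]
      simp_rw [inner_sum]
    · rw [Fintype.sum_option, add_comm]
      simp [u]

/-- `P` is the union of the simplices spanned by the origin and the bases `B i`, whose images are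
the vertex sets of the facets of `P`. -/
structure IsFacetSystem {d : ℕ} {ι : Type*} (P : Set (Euc d))
    (B : ι → Module.Basis (Fin d) ℝ (Euc d)) : Prop where
  cover : ∀ x, ∃ i, ∀ j, 0 ≤ (B i).coord j x
  mem_iff : ∀ x, x ∈ P ↔ ∀ i, coordSum (B i) x ≤ 1
  basis_mem : ∀ i j, B i j ∈ P
  face : ∀ i k m, coordSum (B i) (B k m) = 1 → B k m ∈ Set.range (B i)
  inj : ∀ i k, Set.range (B i) = Set.range (B k) → i = k

lemma linearMap_apply_eq_sum {d : ℕ} (b : Module.Basis (Fin d) ℝ (Euc d))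
    (f : Euc d →ₗ[ℝ] ℝ) (x : Euc d) : f x = ∑ j, b.coord j x * f (b j) := by
  conv_lhs => rw [← sum_coord_smul b x]
  simp only [map_sum, map_smul, smul_eq_mul]

lemma range_eq_of_subset {d : ℕ} {b c : Module.Basis (Fin d) ℝ (Euc d)}
    (h : Set.range b ⊆ Set.range c) : Set.range b = Set.range c := by
  refine Set.eq_of_subset_of_ncard_le h ?_ (Set.finite_range _)
  rw [← Set.image_univ, ← Set.image_univ, Set.ncard_image_of_injective _ b.injective,
    Set.ncard_image_of_injective _ c.injective]

/-- A finite family of nonzero linear forms has no common zero cover of an open set. -/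
lemma exists_mem_open_forall_ne_zero {d : ℕ} {α : Type*} [Finite α]
    {f : α → Euc d →ₗ[ℝ] ℝ} (hf : ∀ a, f a ≠ 0) {U : Set (Euc d)} (hU : IsOpen U)
    (hne : U.Nonempty) : ∃ x ∈ U, ∀ a, f a x ≠ 0 := by
  have hd : Dense (⋂ a, {x | f a x ≠ 0}) := by
    refine dense_iInter_of_isOpen
      (fun a => isOpen_ne_fun (continuous_linearMap (f a)) continuous_const) fun a => ?_
    have h0 := volume_setOf_eq_eq_zero (hf a) 0
    have : {x | f a x ≠ 0} = {x | f a x = 0}ᶜ := rfl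
    rw [this]
    exact interior_eq_empty_iff_dense_compl.1 (Measure.interior_eq_empty_of_null h0)
  obtain ⟨x, hxU, hx⟩ := hd.inter_open_nonempty U hU hne
  exact ⟨x, hxU, fun a => Set.mem_iInter.1 hx a⟩

namespace IsFacetSystem

variable {d : ℕ} {ι : Type*} {P : Set (Euc d)} {B : ι → Module.Basis (Fin d) ℝ (Euc d)}

lemma coordSum_le (hB : IsFacetSystem P B) {i k : ι} {x : Euc d}
    (hx : ∀ j, 0 ≤ (B i).coord j x) : coordSum (B k) x ≤ coordSum (B i) x := by
  rw [linearMap_apply_eq_sum (B i) (coordSum (B k)), coordSum_apply (B i)]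
  refine Finset.sum_le_sum fun j _ => ?_
  have := (hB.mem_iff _).1 (hB.basis_mem i j) k
  nlinarith [hx j]

lemma basis_mem_range (hB : IsFacetSystem P B) {i k : ι} {x : Euc d}
    (hx : ∀ j, 0 ≤ (B i).coord j x) (hk : coordSum (B i) x ≤ coordSum (B k) x) {j : Fin d}
    (hj : 0 < (B i).coord j x) : B i j ∈ Set.range (B k) := by
  have hle := fun j => (hB.mem_iff _).1 (hB.basis_mem i j) k
  refine hB.face k i j (le_antisymm (hle j) (not_lt.1 fun hlt => ?_))
  have : coordSum (B k) x < coordSum (B i) x := by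
    rw [linearMap_apply_eq_sum (B i) (coordSum (B k)), coordSum_apply (B i)]
    refine Finset.sum_lt_sum (fun m _ => ?_) ⟨j, Finset.mem_univ j, ?_⟩
    · nlinarith [hx m, hle m]
    · nlinarith
  linarith

lemma mem_cornerSimplex_of_mem (hB : IsFacetSystem P B) {x : Euc d} (hx : x ∈ P) :
    ∃ i, x ∈ cornerSimplex (B i) := by
  obtain ⟨i, hi⟩ := hB.cover x
  exact ⟨i, mem_cornerSimplex.2 ⟨hi, (hB.mem_iff x).1 hx i⟩⟩

lemma cornerSimplex_subset (hB : IsFacetSystem P B) (i : ι) : cornerSimplex (B i) ⊆ P := by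
  intro x hx
  rw [mem_cornerSimplex] at hx
  exact (hB.mem_iff x).2 fun k => (hB.coordSum_le hx.1).trans hx.2

lemma eq_of_forall_pos (hB : IsFacetSystem P B) {i k : ι} {x : Euc d}
    (hx : ∀ j, 0 < (B i).coord j x) (hk : coordSum (B i) x ≤ coordSum (B k) x) : i = k := by
  refine hB.inj i k (range_eq_of_subset ?_)
  rintro _ ⟨j, rfl⟩
  exact hB.basis_mem_range (fun j => (hx j).le) hk (hx j)

/-- Facets sharing all vertices but one. -/
def Adj (B : ι → Module.Basis (Fin d) ℝ (Euc d)) (i k : ι) (j : Fin d) : Prop :=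
  i ≠ k ∧ ∀ m, m ≠ j → B i m ∈ Set.range (B k)

lemma exists_adj (hB : IsFacetSystem P B) [Finite ι] (i : ι) (j : Fin d) :
    ∃ k, Adj B i k j := by
  classical
  let r : Euc d := ∑ m ∈ univ.erase j, B i m
  let γ : ℝ → Euc d := fun ε => r - ε • B i j
  have hγ : Filter.Tendsto γ (nhdsWithin 0 (Set.Ioi 0)) (nhds r) := by
    have : Continuous γ := by fun_prop
    have h := this.tendsto 0
    simp only [γ, zero_smul, sub_zero] at h
    exact h.mono_left nhdsWithin_le_nhds
  have hr : ∀ m, (B i).coord m r = if m = j then 0 else 1 := fun m => by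
    simp only [r, map_sum, Module.Basis.coord_apply, Module.Basis.repr_self,
      Finsupp.single_apply]
    by_cases hm : m = j <;> simp [hm]
  obtain ⟨k, hk⟩ : ∃ k, ∃ᶠ ε in nhdsWithin (0 : ℝ) (Set.Ioi 0),
      ∀ m, 0 ≤ (B k).coord m (γ ε) := by
    by_contra h
    simp only [not_exists, Filter.not_frequently] at h
    obtain ⟨ε, hε⟩ := (Filter.eventually_all.2 h).exists
    obtain ⟨k, hk⟩ := hB.cover (γ ε)
    exact hε k hk
  have hcl : IsClosed {x | ∀ m, 0 ≤ (B k).coord m x} := by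
    simp only [Set.ofPred_forall]
    exact isClosed_iInter fun m => isClosed_le continuous_const (continuous_linearMap _)
  have hrk : ∀ m, 0 ≤ (B k).coord m r := hcl.mem_of_frequently_of_tendsto hk hγ
  refine ⟨k, ?_, fun m hm => ?_⟩
  · rintro rfl
    obtain ⟨ε, hε, hε0⟩ := (hk.and_eventually self_mem_nhdsWithin).exists
    have h1 := hε j
    simp only [γ, map_sub, hr, map_smul] at h1
    simp at h1
    exact absurd hε0 (not_lt.2 h1)
  · refine hB.basis_mem_range (x := r) (fun m => ?_) (hB.coordSum_le hrk) ?_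
    · rw [hr]; split_ifs <;> norm_num
    · rw [hr, if_neg hm]; norm_num

/-- The dual graph is connected. -/
lemma induction_adj (hB : IsFacetSystem P B) [Finite ι] (G : ι → Prop) {i₀ : ι} (h₀ : G i₀)
    (hstep : ∀ i k j, G i → Adj B i k j → G k) (k₀ : ι) : G k₀ := by
  by_contra hk₀
  have hopen : ∀ i, IsOpen {x | ∀ j, 0 < (B i).coord j x} := fun i => by
    simp only [Set.ofPred_forall]
    exact isOpen_iInter_of_finite fun j => isOpen_lt continuous_const (continuous_linearMap _)
  have hne : ∀ i, {x | ∀ j, 0 < (B i).coord j x}.Nonempty := fun i =>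
    ⟨∑ j, B i j, fun j => by simp [Finsupp.single_apply]⟩
  obtain ⟨x, hx, hx'⟩ := exists_mem_open_forall_ne_zero (α := ι × Fin d)
    (f := fun a => (B a.1).coord a.2) (fun a h => by
      have := LinearMap.congr_fun h (B a.1 a.2)
      simp at this) (hopen i₀) (hne i₀)
  obtain ⟨y, hy, hy'⟩ := exists_mem_open_forall_ne_zero
    (α := {a : ι × Fin d × Fin d // a.2.1 ≠ a.2.2})
    (f := fun a => (B a.1.1).coord a.1.2.2 x • (B a.1.1).coord a.1.2.1
      - (B a.1.1).coord a.1.2.1 x • (B a.1.1).coord a.1.2.2) (fun a h => by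
      have := LinearMap.congr_fun h (B a.1.1 a.1.2.1)
      have h2 := hx' (a.1.1, a.1.2.2)
      simp [a.2] at this
      exact h2 this) (hopen k₀) (hne k₀)
  have hcl : ∀ Q : ι → Prop, IsClosed (⋃ i : {i // Q i}, {z | ∀ m, 0 ≤ (B i).coord m z}) :=
    fun Q => isClosed_iUnion_of_finite fun i => by
      simp only [Set.ofPred_forall]
      exact isClosed_iInter fun m => isClosed_le continuous_const (continuous_linearMap _)
  obtain ⟨z, hz, hzA, hzB⟩ := isPreconnected_closed_iff.1 (convex_segment x y).isPreconnected
    _ _ (hcl G) (hcl fun i => ¬ G i)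
    (fun z _ => by
      obtain ⟨i, hi⟩ := hB.cover z
      by_cases hG : G i
      · exact Or.inl (Set.mem_iUnion.2 ⟨⟨i, hG⟩, hi⟩)
      · exact Or.inr (Set.mem_iUnion.2 ⟨⟨i, hG⟩, hi⟩))
    ⟨x, left_mem_segment ℝ x y, Set.mem_iUnion.2 ⟨⟨i₀, h₀⟩, fun m => (hx m).le⟩⟩
    ⟨y, right_mem_segment ℝ x y, Set.mem_iUnion.2 ⟨⟨k₀, hk₀⟩, fun m => (hy m).le⟩⟩
  obtain ⟨⟨i, hi⟩, hzi⟩ := Set.mem_iUnion.1 hzA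
  obtain ⟨⟨k, hk⟩, hzk⟩ := Set.mem_iUnion.1 hzB
  have hik : i ≠ k := by rintro rfl; exact hk hi
  have hmem : ∀ m, 0 < (B i).coord m z → B i m ∈ Set.range (B k) := fun m hm =>
    hB.basis_mem_range hzi (hB.coordSum_le hzk) hm
  obtain ⟨j, hj⟩ : ∃ j, ¬ 0 < (B i).coord j z := by
    by_contra! h
    exact hik (hB.eq_of_forall_pos h (hB.coordSum_le hzk))
  obtain ⟨j', hjj', hj'⟩ : ∃ j', j' ≠ j ∧ ¬ 0 < (B i).coord j' z := by
    by_contra! h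
    exact hk (hstep i k j hi ⟨hik, fun m hm => hmem m (h m hm)⟩)
  have e1 : (B i).coord j z = 0 := le_antisymm (not_lt.1 hj) (hzi j)
  have e2 : (B i).coord j' z = 0 := le_antisymm (not_lt.1 hj') (hzi j')
  obtain ⟨s, t, _, _, hst, rfl⟩ := hz
  have h3 := hy' ⟨(i, j, j'), hjj'.symm⟩
  have h4 := hx' (i, j)
  simp only [map_add, map_smul, smul_eq_mul, LinearMap.sub_apply, LinearMap.smul_apply] at e1 e2 h3 h4
  have h5 : t * ((B i).coord j' x * (B i).coord j y - (B i).coord j x * (B i).coord j' y) = 0 := by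
    linear_combination (B i).coord j' x * e1 - (B i).coord j x * e2
  rcases mul_eq_zero.1 h5 with h6 | h6
  · rw [h6, add_zero] at hst
    rw [h6, hst] at e1
    exact h4 (by linarith)
  · exact h3 h6

end IsFacetSystem

lemma eq_of_orthogonal_of_norm_eq {d : ℕ} (b : Module.Basis (Fin d) ℝ (Euc d)) {j : Fin d}
    {u w : Euc d} (hu : ∀ m, m ≠ j → ⟪b m, u - b j⟫ = 0) (hw : ∀ m, m ≠ j → ⟪b m, w - b j⟫ = 0)
    (hun : ‖u‖ = ‖b j‖) (hwn : ‖w‖ = ‖b j‖) (hu' : u ≠ b j) (hw' : w ≠ b j) : u = w := by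
  have hsq : ∀ y : Euc d, ‖y‖ = ‖b j‖ → ‖y - b j‖ ^ 2 = -2 * ⟪b j, y - b j⟫ := fun y hy => by
    rw [norm_sub_sq_real, hy, inner_sub_right, real_inner_self_eq_norm_sq, real_inner_comm]
    ring
  set y := u - b j
  set z := w - b j
  have hy0 : ‖y‖ ≠ 0 := norm_ne_zero_iff.2 (sub_ne_zero.2 hu')
  have hz0 : ‖z‖ ≠ 0 := norm_ne_zero_iff.2 (sub_ne_zero.2 hw')
  have hy := hsq u hun
  have hz := hsq w hwn
  have hlin : ⟪b j, z⟫ • y = ⟪b j, y⟫ • z := by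
    refine InnerProductSpace.ext_inner_left_basis b fun m => ?_
    rcases eq_or_ne m j with rfl | hm
    · simp only [real_inner_smul_right]; ring
    · simp only [real_inner_smul_right, hu m hm, hw m hm, mul_zero]
  have ha : ⟪b j, y⟫ ≠ 0 := fun h => hy0 (by rw [h] at hy; simpa using hy)
  have hb : ⟪b j, z⟫ ≠ 0 := fun h => hz0 (by rw [h] at hz; simpa using hz)
  have hnorm : ⟪b j, z⟫ ^ 2 * ‖y‖ ^ 2 = ⟪b j, y⟫ ^ 2 * ‖z‖ ^ 2 := by
    have := congrArg (fun x => ‖x‖ ^ 2) hlin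
    simpa only [norm_smul, mul_pow, Real.norm_eq_abs, sq_abs] using this
  have hab : ⟪b j, z⟫ = ⟪b j, y⟫ := by
    rw [hy, hz] at hnorm
    have h : ⟪b j, y⟫ * ⟪b j, z⟫ * (⟪b j, z⟫ - ⟪b j, y⟫) = 0 := by linarith
    rcases mul_eq_zero.1 h with h | h
    · exact absurd h (mul_ne_zero ha hb)
    · linarith
  rw [hab] at hlin
  have hyz : y = z := smul_right_injective _ ha hlin
  exact sub_left_injective hyz

namespace IsFacetSystem

variable {d : ℕ} {ι : Type*} {P : Set (Euc d)} {B : ι → Module.Basis (Fin d) ℝ (Euc d)} {c : ℝ}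

/-- Adjacent facets differ by one vertex, and the two differing vertices are mirror images with
respect to the span of the common ones. -/
lemma exists_mirror_vertex (hB : IsFacetSystem P B)
    (hc : ∀ i j, ⟪B i j, B i j + ∑ m, B i m⟫ = c) {i k : ι} {j : Fin d} (h : Adj B i k j) :
    ∃ v, Set.range (B k) = insert v (B i '' {j}ᶜ) ∧ v ≠ B i j ∧
      (∀ m, m ≠ j → ⟪B i m, v - B i j⟫ = 0) ∧ ‖v‖ = ‖B i j‖ := by
  classical
  let R : Finset (Euc d) := (univ.erase j).image (B i)
  have hRk : R ⊆ univ.image (B k) := by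
    intro x hx
    obtain ⟨m, hm, rfl⟩ := Finset.mem_image.1 hx
    obtain ⟨m', hm'⟩ := h.2 m (Finset.ne_of_mem_erase hm)
    exact Finset.mem_image.2 ⟨m', Finset.mem_univ _, hm'⟩
  have hcard : R.card + 1 = (univ.image (B k)).card := by
    rw [Finset.card_image_of_injective _ (B i).injective,
      Finset.card_image_of_injective _ (B k).injective,
      Finset.card_erase_add_one (Finset.mem_univ _)]
  obtain ⟨v, hvR, hv⟩ := Finset.exists_eq_insert_iff.2 ⟨hRk, hcard⟩
  have hRset : (R : Set (Euc d)) = B i '' {j}ᶜ := by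
    simp [R, Set.compl_eq_univ_sdiff]
  have hrange : Set.range (B k) = insert v (B i '' {j}ᶜ) := by
    have := congrArg (fun s : Finset (Euc d) => (s : Set (Euc d))) hv
    simpa [hRset] using this.symm
  have hsumk : ∑ m, B k m = v + ∑ x ∈ R, x := by
    rw [← Finset.sum_insert (f := fun x => x) hvR, hv, Finset.sum_image (B k).injective.injOn]
  have hsumi : ∑ m, B i m = B i j + ∑ x ∈ R, x := by
    rw [Finset.sum_image (B i).injective.injOn, Finset.add_sum_erase _ _ (Finset.mem_univ j)]
  have hck : ∀ x ∈ Set.range (B k), ⟪x, x + (v + ∑ x ∈ R, x)⟫ = c := by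
    rintro _ ⟨m, rfl⟩
    rw [← hsumk]; exact hc k m
  have hperp : ∀ m, m ≠ j → ⟪B i m, v - B i j⟫ = 0 := fun m hm => by
    have h1 := hc i m
    have h2 := hck (B i m) (h.2 m hm)
    rw [hsumi] at h1
    simp only [inner_add_right, inner_sub_right] at h1 h2 ⊢
    linarith
  refine ⟨v, hrange, ?_, hperp, ?_⟩
  · rintro rfl
    refine h.1 (hB.inj i k ?_)
    rw [hrange, ← Set.image_insert_eq, Set.insert_eq, Set.union_compl_self, Set.image_univ]
  · have h1 := hc i j
    have h2 := hck v (hrange ▸ Set.mem_insert _ _)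
    rw [hsumi] at h1
    have h3 : ⟪∑ x ∈ R, x, v - B i j⟫ = 0 := by
      rw [sum_inner]
      refine Finset.sum_eq_zero fun x hx => ?_
      obtain ⟨m, hm, rfl⟩ := Finset.mem_image.1 hx
      exact hperp m (Finset.ne_of_mem_erase hm)
    rw [inner_sub_right, real_inner_comm, real_inner_comm (B i j)] at h3
    simp only [inner_add_right, real_inner_self_eq_norm_sq] at h1 h2
    exact (sq_eq_sq₀ (norm_nonneg _) (norm_nonneg _)).1 (by linarith)

lemma exists_image_range_eq_of_adj (hB : IsFacetSystem P B) [Finite ι]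
    (hc : ∀ i j, ⟪B i j, B i j + ∑ m, B i m⟫ = c) (φ : Euc d ≃ₗᵢ[ℝ] Euc d) {i i' : ι} {j : Fin d}
    (hi : ∃ k, φ '' Set.range (B i) = Set.range (B k)) (h : Adj B i i' j) :
    ∃ k, φ '' Set.range (B i') = Set.range (B k) := by
  obtain ⟨k, hk⟩ := hi
  have hmem : ∀ m, ∃ m', B k m' = φ (B i m) := fun m => Set.mem_range.1
    (hk ▸ Set.mem_image_of_mem φ (Set.mem_range_self m))
  obtain ⟨j', hj'⟩ := hmem j
  obtain ⟨k', hk'⟩ := hB.exists_adj k j'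
  obtain ⟨v, hv, hvne, hvp, hvn⟩ := hB.exists_mirror_vertex hc h
  obtain ⟨w, hw, hwne, hwp, hwn⟩ := hB.exists_mirror_vertex hc hk'
  have hR : φ '' (B i '' {j}ᶜ) = B k '' {j'}ᶜ := by
    rw [Set.image_compl_eq_range_sdiff_image (B i).injective, Set.image_sdiff φ.injective, hk,
      Set.image_compl_eq_range_sdiff_image (B k).injective]
    simp [hj']
  refine ⟨k', ?_⟩
  rw [hv, Set.image_insert_eq, hR, hw]
  congr 1
  refine eq_of_orthogonal_of_norm_eq (B k) (fun m hm => ?_) hwp ?_ hwn ?_ hwne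
  · obtain ⟨_, ⟨m', hm', rfl⟩, h2⟩ : B k m ∈ φ '' (B i '' {j}ᶜ) := by
      rw [hR]; exact ⟨m, hm, rfl⟩
    rw [← h2, hj', ← map_sub, LinearIsometryEquiv.inner_map_map]
    exact hvp m' hm'
  · rw [hj', LinearIsometryEquiv.norm_map, LinearIsometryEquiv.norm_map, hvn]
  · rw [hj']; exact fun e => hvne (φ.injective e)

lemma image_subset (hB : IsFacetSystem P B) {φ : Euc d ≃ₗᵢ[ℝ] Euc d}
    (h : ∀ i, ∃ k, φ '' Set.range (B i) = Set.range (B k)) : φ '' P ⊆ P := by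
  rintro _ ⟨x, hx, rfl⟩
  obtain ⟨i, hi⟩ := hB.mem_cornerSimplex_of_mem hx
  rw [mem_cornerSimplex, coordSum_apply] at hi
  refine (hB.mem_iff _).2 fun l => le_trans ?_ hi.2
  conv_lhs => rw [← sum_coord_smul (B i) x]
  simp only [map_sum, map_smul, smul_eq_mul]
  refine Finset.sum_le_sum fun j _ => ?_
  obtain ⟨k, hk⟩ := h i
  obtain ⟨m, hm⟩ : φ (B i j) ∈ Set.range (B k) :=
    hk ▸ Set.mem_image_of_mem φ (Set.mem_range_self j)
  have := (hB.mem_iff _).1 (hB.basis_mem k m) l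
  rw [hm] at this
  nlinarith [hi.1 j]

/-- Adjacent facets are exchanged by a reflection preserving the polytope. -/
lemma exists_isometry_of_adj (hB : IsFacetSystem P B) [Finite ι]
    (hc : ∀ i j, ⟪B i j, B i j + ∑ m, B i m⟫ = c) {i k : ι} {j : Fin d} (h : Adj B i k j) :
    ∃ φ : Euc d ≃ₗᵢ[ℝ] Euc d, φ '' P = P ∧ φ '' Set.range (B i) = Set.range (B k) := by
  obtain ⟨v, hv, -, hvp, hvn⟩ := hB.exists_mirror_vertex hc h
  let φ : Euc d ≃ₗᵢ[ℝ] Euc d := (ℝ ∙ (B i j - v))ᗮ.reflection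
  have hφj : φ (B i j) = v := Submodule.reflection_sub hvn.symm
  have hφm : ∀ m, m ≠ j → φ (B i m) = B i m := fun m hm => by
    refine Submodule.reflection_mem_subspace_eq_self
      (Submodule.mem_orthogonal_singleton_iff_inner_left.2 ?_)
    rw [← neg_sub, inner_neg_right, hvp m hm, neg_zero]
  have hφ : φ '' Set.range (B i) = Set.range (B k) := by
    rw [hv, ← hφj, ← Set.image_univ, ← Set.union_compl_self {j}, Set.image_union, Set.image_union,
      Set.image_singleton, Set.image_singleton, Set.singleton_union]
    congr 1
    rw [Set.image_image]
    exact Set.image_congr fun m hm => hφm m hm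
  have hsub : φ '' P ⊆ P := hB.image_subset (hB.induction_adj _ (i₀ := i) ⟨k, hφ⟩
    fun i i' j hi hadj => hB.exists_image_range_eq_of_adj hc φ hi hadj)
  refine ⟨φ, hsub.antisymm fun x hx => ⟨φ x, hsub ⟨x, hx, rfl⟩, ?_⟩, hφ⟩
  exact Submodule.reflection_reflection _ x

lemma exists_isometry (hB : IsFacetSystem P B) [Finite ι]
    (hc : ∀ i j, ⟪B i j, B i j + ∑ m, B i m⟫ = c) (i k : ι) :
    ∃ φ : Euc d ≃ₗᵢ[ℝ] Euc d, φ '' P = P ∧ φ '' Set.range (B i) = Set.range (B k) := by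
  refine hB.induction_adj (fun k => ∃ φ : Euc d ≃ₗᵢ[ℝ] Euc d, φ '' P = P ∧
    φ '' Set.range (B i) = Set.range (B k)) (i₀ := i) ⟨.refl ℝ _, by simp, by simp⟩ ?_ k
  rintro k k' j ⟨φ, hφP, hφ⟩ hadj
  obtain ⟨ψ, hψP, hψ⟩ := hB.exists_isometry_of_adj hc hadj
  refine ⟨φ.trans ψ, ?_, ?_⟩
  · rw [LinearIsometryEquiv.coe_trans, Set.image_comp, hφP, hψP]
  · rw [LinearIsometryEquiv.coe_trans, Set.image_comp, hφ, hψ]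

end IsFacetSystem

lemma hasDerivAt_const_add_mul {I : ℝ → ℝ} (hI : ContinuousAt I 0) (a : ℝ) :
    HasDerivAt (fun t => a + t * I t) (I 0) 0 := by
  rw [hasDerivAt_iff_tendsto_slope]
  refine (hI.tendsto.mono_left nhdsWithin_le_nhds).congr' ?_
  filter_upwards [self_mem_nhdsWithin] with t ht
  have : t ≠ 0 := ht
  simp [slope, this]

lemma hasDerivAt_det_of_eq_one {d : ℕ} {A : ℝ → Matrix (Fin d) (Fin d) ℝ}
    {A' : Matrix (Fin d) (Fin d) ℝ} (hA : ∀ i j, HasDerivAt (fun t => A t i j) (A' i j) 0)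
    (h1 : A 0 = 1) : HasDerivAt (fun t => (A t).det) A'.trace 0 := by
  simp only [Matrix.det_apply']
  have h := HasDerivAt.fun_sum (u := (univ : Finset (Equiv.Perm (Fin d))))
    (A := fun σ t => ((Equiv.Perm.sign σ : ℤ) : ℝ) * ∏ i, A t (σ i) i)
    (x := (0 : ℝ)) fun σ _ =>
    (HasDerivAt.fun_finsetProd (u := univ) (f := fun i t => A t (σ i) i) (x := (0 : ℝ))
      (fun i _ => hA (σ i) i)).const_mul ((Equiv.Perm.sign σ : ℤ) : ℝ)
  refine h.congr_deriv ?_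
  rw [Finset.sum_eq_single 1]
  · simp [h1, Matrix.trace]
  · intro σ _ hσ
    rw [Finset.sum_eq_zero, mul_zero]
    intro i _
    have : ∃ j, j ≠ i ∧ σ j ≠ j := by
      by_contra! hcon
      refine hσ (Equiv.ext fun j => ?_)
      rcases eq_or_ne j i with rfl | hj
      · by_contra hne
        exact hne (σ.injective (hcon (σ j) hne))
      · exact hcon j hj
    obtain ⟨j, hj, hσj⟩ := this
    rw [Finset.prod_eq_zero (Finset.mem_erase.2 ⟨hj, Finset.mem_univ j⟩), zero_smul]
    rw [h1, Matrix.one_apply_ne hσj]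
  · simp

lemma deriv_nonpos_of_eventually_le {ψ : ℝ → ℝ} {ψ' : ℝ} (h : HasDerivAt ψ ψ' 0)
    (hle : ∀ᶠ t in nhdsWithin (0 : ℝ) (Set.Ioi 0), ψ t ≤ ψ 0) : ψ' ≤ 0 := by
  have h1 : Filter.Tendsto (slope ψ 0) (nhdsWithin 0 (Set.Ioi 0)) (nhds ψ') :=
    (hasDerivAt_iff_tendsto_slope.1 h).mono_left (nhdsWithin_mono _ fun t ht => ne_of_gt ht)
  refine le_of_tendsto h1 ?_
  filter_upwards [hle, self_mem_nhdsWithin] with t ht ht0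
  have : (0 : ℝ) < t := ht0
  rw [slope_def_field]
  exact div_nonpos_of_nonpos_of_nonneg (by linarith) (by linarith)

lemma continuous_coord {d : ℕ} (i : Fin d) : Continuous fun x : Euc d => x i := by fun_prop

lemma centroid_apply {d : ℕ} {K : Set (Euc d)} (hK : IsCompact K) (i : Fin d) :
    centroid K i = (volume.real K)⁻¹ * ∫ x in K, x i := by
  have h : IntegrableOn (fun x : Euc d => x) K :=
    continuous_id.continuousOn.integrableOn_compact hK
  have := (EuclideanSpace.proj (𝕜 := ℝ) i : Euc d →L[ℝ] ℝ).integral_comp_comm h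
  exact congrArg ((volume.real K)⁻¹ * ·) this.symm

lemma covMatrix_apply {d : ℕ} {K : Set (Euc d)} (hK : IsCompact K) (h0 : volume.real K ≠ 0)
    (i j : Fin d) : covMatrix K i j = (∫ x in K, x i * x j) / volume.real K -
      (∫ x in K, x i) * (∫ x in K, x j) / volume.real K ^ 2 := by
  have hint : ∀ {φ : Euc d → ℝ}, Continuous φ → IntegrableOn φ K := fun hφ =>
    hφ.continuousOn.integrableOn_compact hK
  have e : ∀ x : Euc d, (x i - centroid K i) * (x j - centroid K j) =
      (x i * x j - centroid K j * x i) - (centroid K i * x j - centroid K i * centroid K j) :=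
    fun x => by ring
  have hi := continuous_coord i
  have hj := continuous_coord j
  simp only [covMatrix, Matrix.of_apply, e]
  rw [integral_sub (hint (by fun_prop)) (hint (by fun_prop)),
    integral_sub (hint (by fun_prop)) (hint (by fun_prop)),
    integral_sub (hint (by fun_prop)) (hint (by fun_prop)), integral_const_mul, integral_const_mul,
    setIntegral_const, centroid_apply hK, centroid_apply hK]
  change (volume.real K)⁻¹ * _ = _
  rw [smul_eq_mul]
  field_simp
  ring

lemma IsIsotropic.setIntegral_coord {d : ℕ} {P : Set (Euc d)} (hiso : IsIsotropic P)
    (hP : IsCompact P) (hPV : 0 < volume.real P) (i : Fin d) : ∫ x in P, x i = 0 := by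
  have h := centroid_apply hP i
  rw [hiso.1] at h
  simpa [hPV.ne'] using h

lemma IsIsotropic.setIntegral_coord_mul_coord {d : ℕ} {P : Set (Euc d)} (hiso : IsIsotropic P)
    (hP : IsCompact P) (hPV : 0 < volume.real P) (i j : Fin d) :
    ∫ x in P, x i * x j = volume.real P * (1 : Matrix (Fin d) (Fin d) ℝ) i j := by
  have h := covMatrix_apply hP hPV.ne' i j
  rw [hiso.2, hiso.setIntegral_coord hP hPV, zero_mul, zero_div, sub_zero] at h
  rw [h]
  field_simp

lemma IsIsotropic.setIntegral_norm_sq {d : ℕ} {P : Set (Euc d)} (hiso : IsIsotropic P)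
    (hP : IsCompact P) (hPV : 0 < volume.real P) : ∫ x in P, ‖x‖ ^ 2 = d * volume.real P := by
  simp_rw [EuclideanSpace.real_norm_sq_eq, sq]
  rw [integral_finsetSum _ fun i _ => ?_]
  · simp [hiso.setIntegral_coord_mul_coord hP hPV]
  · exact ((continuous_coord i).mul (continuous_coord i)).continuousOn.integrableOn_compact hP

/-- First variation of `det A(K) / vol(K) ^ 2` at an isotropic body, when a thin bump is added. -/
lemma hasDerivAt_det_covMatrix_div {d : ℕ} {P D : Set (Euc d)} (hP : IsCompact P)
    (hPV : 0 < volume.real P) (hiso : IsIsotropic P) (hD : IsCompact D)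
    {T : ℝ → Euc d → Euc d} (hT : Continuous (Function.uncurry T)) {K : ℝ → Set (Euc d)}
    (hK : ∀ᶠ t in nhdsWithin (0 : ℝ) (Set.Ioi 0), IsCompact (K t) ∧ ∀ φ : Euc d → ℝ, Continuous φ →
      ∫ x in K t, φ x = (∫ x in P, φ x) + t * ∫ y in D, φ (T t y)) :
    ∃ ψ : ℝ → ℝ, HasDerivAt ψ
        (((∫ y in D, ‖T 0 y‖ ^ 2) - (d + 2) * volume.real D) / volume.real P ^ 3) 0 ∧
      ψ 0 = (covMatrix P).det / volume.real P ^ 2 ∧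
      ∀ᶠ t in nhdsWithin (0 : ℝ) (Set.Ioi 0), ψ t = (covMatrix (K t)).det / volume.real (K t) ^ 2 := by
  let M : (Euc d → ℝ) → ℝ → ℝ := fun φ t => (∫ x in P, φ x) + t * ∫ y in D, φ (T t y)
  have hM : ∀ φ : Euc d → ℝ, Continuous φ → HasDerivAt (M φ) (∫ y in D, φ (T 0 y)) 0 := by
    intro φ hφ
    have hc : Continuous fun t => ∫ y in D, φ (T t y) :=
      continuous_parametric_integral_of_continuous (f := fun t y => φ (T t y)) (hφ.comp hT) hD
    exact hasDerivAt_const_add_mul hc.continuousAt _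
  have hM0 : ∀ φ, M φ 0 = ∫ x in P, φ x := fun φ => by simp [M]
  let A : ℝ → Matrix (Fin d) (Fin d) ℝ := fun t => Matrix.of fun i j =>
    M (fun x => x i * x j) t / M (fun _ => 1) t -
      M (fun x => x i) t * M (fun x => x j) t / M (fun _ => 1) t ^ 2
  have hV0 : M (fun _ => 1) 0 = volume.real P := by rw [hM0]; simp
  have hA0 : A 0 = covMatrix P := by
    ext i j
    simp only [A, Matrix.of_apply]
    rw [hV0, hM0, hM0, hM0, covMatrix_apply hP hPV.ne']
  have hm1 := hiso.setIntegral_coord hP hPV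
  have hm2 := hiso.setIntegral_coord_mul_coord hP hPV
  let V := volume.real P
  let A' : Matrix (Fin d) (Fin d) ℝ := Matrix.of fun i j =>
    ((∫ y in D, T 0 y i * T 0 y j) - (1 : Matrix _ _ ℝ) i j * volume.real D) / V
  have hMV := hM (fun _ => 1) continuous_const
  have hVD : ∫ y in D, (1 : ℝ) = volume.real D := by simp
  rw [hVD] at hMV
  have hA : ∀ i j, HasDerivAt (fun t => A t i j) (A' i j) 0 := by
    intro i j
    have hi := continuous_coord i
    have hj := continuous_coord j
    have h1 := (hM (fun x => x i * x j) (by fun_prop)).fun_div hMV (by rw [hV0]; exact hPV.ne')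
    have h2 := ((hM (fun x => x i) hi).fun_mul (hM (fun x => x j) hj)).fun_div (hMV.fun_pow 2)
      (by rw [hV0]; positivity)
    refine (h1.fun_sub h2).congr_deriv ?_
    rw [hV0, hM0, hM0, hM0, hm1, hm1, hm2]
    simp only [A', Matrix.of_apply, V]
    field_simp
    ring
  have hdet := hasDerivAt_det_of_eq_one hA (by rw [hA0, hiso.2])
  refine ⟨fun t => (A t).det / M (fun _ => 1) t ^ 2, ?_, ?_, ?_⟩
  · refine (hdet.fun_div (hMV.fun_pow 2) (by rw [hV0]; positivity)).congr_deriv ?_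
    have htr : A'.trace = ((∫ y in D, ‖T 0 y‖ ^ 2) - d * volume.real D) / V := by
      have hT0 : Continuous (T 0) := hT.comp (Continuous.prodMk_right 0)
      have hn : ∀ y, ‖T 0 y‖ ^ 2 = ∑ i, T 0 y i * T 0 y i := fun y => by
        rw [EuclideanSpace.real_norm_sq_eq]
        simp only [sq]
      simp_rw [hn]
      rw [integral_finsetSum _ fun i _ => ?_]
      · simp [Matrix.trace, A', ← sum_div, sum_sub_distrib]
      · have : Continuous fun y => T 0 y i := (continuous_coord i).comp hT0
        exact (this.mul this).continuousOn.integrableOn_compact hD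
    rw [htr, hV0, hA0, hiso.2, Matrix.det_one]
    simp only [V]
    field_simp
    ring
  · simp only [hV0, hA0]
  · have hpos : ∀ᶠ t in nhdsWithin (0 : ℝ) (Set.Ioi 0), 0 < M (fun _ => 1) t :=
      (hMV.continuousAt.eventually (lt_mem_nhds (by rw [hV0]; exact hPV))).filter_mono
        nhdsWithin_le_nhds
    filter_upwards [hK, hpos] with t ht htpos
    have hvol : M (fun _ => 1) t = volume.real (K t) := by
      have := ht.2 (fun _ => 1) continuous_const
      simp only [M, ← this]
      simp
    have hAt : A t = covMatrix (K t) := by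
      ext i j
      have hi := continuous_coord i
      have hj := continuous_coord j
      rw [covMatrix_apply ht.1 (by rw [← hvol]; exact htpos.ne'), ht.2 _ (by fun_prop), ht.2 _ hi,
        ht.2 _ hj, ← hvol]
      rfl
    simp only [hAt, hvol]

lemma isoConst_lt_isoConst {d : ℕ} (hd : 2 ≤ d) {K L : Set (Euc d)}
    (h0 : 0 ≤ (covMatrix K).det / volume.real K ^ 2)
    (h : (covMatrix K).det / volume.real K ^ 2 < (covMatrix L).det / volume.real L ^ 2) :
    isoConst K < isoConst L :=
  Real.rpow_lt_rpow h0 h (by positivity)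

/-- First-order condition at a local extremum of the isotropic constant. -/
lemma exists_sign_first_variation {d : ℕ} (hd : 2 ≤ d) {P : Set (Euc d)} (hP : IsCompact P)
    (hPV : 0 < volume.real P) (hiso : IsIsotropic P) (hext : IsLocalExtremumOfIsoConst P) :
    ∃ σ : ℝ, σ ≠ 0 ∧ ∀ (D : Set (Euc d)) (T : ℝ → Euc d → Euc d) (K : ℝ → Set (Euc d)),
      IsCompact D → Continuous (Function.uncurry T) →
      (∀ᶠ t in nhdsWithin (0 : ℝ) (Set.Ioi 0), IsConvexBody (K t) ∧
        ∀ φ : Euc d → ℝ, Continuous φ →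
          ∫ x in K t, φ x = (∫ x in P, φ x) + t * ∫ y in D, φ (T t y)) →
      (∀ ε > 0, ∀ᶠ t in nhdsWithin (0 : ℝ) (Set.Ioi 0), Metric.hausdorffDist (K t) P < ε) →
      σ * ((∫ y in D, ‖T 0 y‖ ^ 2) - (d + 2) * volume.real D) ≤ 0 := by
  have hP0 : 0 < (covMatrix P).det / volume.real P ^ 2 := by
    rw [hiso.2, Matrix.det_one]; positivity
  rcases hext with ⟨ε, hε, hmax⟩ | ⟨ε, hε, hmin⟩
  · refine ⟨1, one_ne_zero, fun D T K hD hT hK hdist => ?_⟩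
    obtain ⟨ψ, hψ, hψ0, hψt⟩ := hasDerivAt_det_covMatrix_div hP hPV hiso hD hT
      (hK.mono fun t ht => ⟨ht.1.1, ht.2⟩)
    have := deriv_nonpos_of_eventually_le hψ (by
      filter_upwards [hψt, hK, hdist ε hε] with t h1 h2 h3
      rw [h1, hψ0]
      refine not_lt.1 fun hlt => ?_
      exact absurd (hmax _ h2.1 h3) (not_le.2 (isoConst_lt_isoConst hd hP0.le hlt)))
    rw [one_mul]
    by_contra! hcon
    exact absurd this (not_le.2 (div_pos hcon (by positivity)))
  · refine ⟨-1, by norm_num, fun D T K hD hT hK hdist => ?_⟩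
    obtain ⟨ψ, hψ, hψ0, hψt⟩ := hasDerivAt_det_covMatrix_div hP hPV hiso hD hT
      (hK.mono fun t ht => ⟨ht.1.1, ht.2⟩)
    have hpos : ∀ᶠ t in nhdsWithin (0 : ℝ) (Set.Ioi 0), 0 < ψ t :=
      (hψ.continuousAt.eventually (lt_mem_nhds (by rw [hψ0]; exact hP0))).filter_mono
        nhdsWithin_le_nhds
    have := deriv_nonpos_of_eventually_le hψ.neg (by
      filter_upwards [hψt, hK, hdist ε hε, hpos] with t h1 h2 h3 h4
      simp only [Pi.neg_apply, neg_le_neg_iff]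
      rw [h1] at h4 ⊢
      rw [hψ0]
      refine not_lt.1 fun hlt => ?_
      exact absurd (hmin _ h2.1 h3) (not_le.2 (isoConst_lt_isoConst hd h4.le hlt)))
    by_contra! hcon
    rw [← neg_div] at this
    exact absurd this (not_le.2 (div_pos (by linarith) (by positivity)))

/-- The affine map fixing the hyperplane `coordSum b = 1` and sending the origin to
`(1 + t) • q`. -/
def bump {d : ℕ} (b : Module.Basis (Fin d) ℝ (Euc d)) (q : Euc d) (t : ℝ) : Euc d → Euc d :=
  affineShear (-(1 + t) • coordSum b) (1 + t) q

lemma bump_apply {d : ℕ} (b : Module.Basis (Fin d) ℝ (Euc d)) (q : Euc d) (t : ℝ) (x : Euc d) :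
    bump b q t x = x + ((1 + t) * (1 - coordSum b x)) • q := by
  simp only [bump, affineShear, LinearMap.smul_apply, smul_eq_mul]
  congr 2
  ring

lemma continuous_uncurry_bump {d : ℕ} (b : Module.Basis (Fin d) ℝ (Euc d)) (q : Euc d) :
    Continuous (Function.uncurry (bump b q)) := by
  have h := continuous_linearMap (coordSum b)
  have e : Function.uncurry (bump b q) =
      fun p : ℝ × Euc d => p.2 + ((1 + p.1) * (1 - coordSum b p.2)) • q :=
    funext fun p => bump_apply b q p.1 p.2
  rw [e]
  fun_prop

lemma mem_image_bump {d : ℕ} {b : Module.Basis (Fin d) ℝ (Euc d)} {q : Euc d}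
    (hq : ∀ j, 0 < b.coord j q) (hq1 : coordSum b q = 1) {t : ℝ} (ht : 0 < t) {z : Euc d} :
    z ∈ bump b q t '' cornerSimplex b ↔ 1 ≤ coordSum b z ∧
      ∀ j, coordSum b z - t / ((1 + t) * b.coord j q) * b.coord j z ≤ 1 := by
  have hsum : ∀ y, coordSum b (bump b q t y) = 1 + t * (1 - coordSum b y) := fun y => by
    rw [bump_apply, map_add, map_smul, hq1, smul_eq_mul]
    ring
  constructor
  · rintro ⟨y, hy, rfl⟩
    rw [mem_cornerSimplex] at hy
    refine ⟨by rw [hsum]; nlinarith [hy.2], fun j => ?_⟩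
    have h1 := hq j
    have h2 := hy.1 j
    rw [hsum, bump_apply, map_add, map_smul, smul_eq_mul]
    have : t / ((1 + t) * b.coord j q) * (b.coord j y +
        (1 + t) * (1 - coordSum b y) * b.coord j q) =
        t / ((1 + t) * b.coord j q) * b.coord j y + t * (1 - coordSum b y) := by
      field_simp
    rw [this]
    have : 0 ≤ t / ((1 + t) * b.coord j q) * b.coord j y := by positivity
    linarith
  · rintro ⟨h1, h2⟩
    let y := z - ((1 + t) / t * (coordSum b z - 1)) • q
    have hy : 1 - coordSum b y = (coordSum b z - 1) / t := by
      simp only [y, map_sub, map_smul, hq1, smul_eq_mul]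
      field_simp
      ring
    refine ⟨y, mem_cornerSimplex.2 ⟨fun j => ?_, ?_⟩, ?_⟩
    · have h3 := h2 j
      have h4 := hq j
      simp only [y, map_sub, map_smul, smul_eq_mul]
      have h5 : coordSum b z - 1 ≤ t / ((1 + t) * b.coord j q) * b.coord j z := by linarith
      rw [div_mul_eq_mul_div, le_div_iff₀ (by positivity)] at h5
      have h6 : (1 + t) / t * (coordSum b z - 1) * b.coord j q ≤ b.coord j z := by
        rw [div_mul_eq_mul_div, div_mul_eq_mul_div, div_le_iff₀ ht]
        linarith
      linarith
    · have : 0 ≤ 1 - coordSum b y := by rw [hy]; exact div_nonneg (by linarith) ht.le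
      linarith
    · rw [bump_apply, hy]
      have : (1 + t) * ((coordSum b z - 1) / t) = (1 + t) / t * (coordSum b z - 1) := by ring
      rw [this, sub_add_cancel]

lemma coordSum_ne_zero {d : ℕ} {b : Module.Basis (Fin d) ℝ (Euc d)} {q : Euc d}
    (hq1 : coordSum b q = 1) : coordSum b ≠ 0 := by
  intro h
  rw [h] at hq1
  simp at hq1

namespace IsFacetSystem

variable {d : ℕ} {ι : Type*} {P : Set (Euc d)} {B : ι → Module.Basis (Fin d) ℝ (Euc d)}

lemma union_bump_eq (hB : IsFacetSystem P B) {i : ι} {q : Euc d}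
    (hq : ∀ j, 0 < (B i).coord j q) (hq1 : coordSum (B i) q = 1) {t : ℝ} (ht : 0 < t)
    (h1 : ∀ k, k ≠ i → (1 + t) * coordSum (B k) q ≤ 1)
    (h2 : ∀ k m j, coordSum (B i) (B k m) -
      t / ((1 + t) * (B i).coord j q) * (B i).coord j (B k m) ≤ 1) :
    P ∪ bump (B i) q t '' cornerSimplex (B i) =
      {x | (∀ k, k ≠ i → coordSum (B k) x ≤ 1) ∧
        ∀ j, coordSum (B i) x - t / ((1 + t) * (B i).coord j q) * (B i).coord j x ≤ 1} := by
  ext x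
  simp only [Set.mem_union, Set.mem_ofPred_eq]
  constructor
  · rintro (hx | hx)
    · refine ⟨fun k _ => (hB.mem_iff x).1 hx k, fun j => ?_⟩
      obtain ⟨k, hk⟩ := hB.mem_cornerSimplex_of_mem hx
      rw [mem_cornerSimplex] at hk
      let g : Euc d →ₗ[ℝ] ℝ :=
        coordSum (B i) - (t / ((1 + t) * (B i).coord j q)) • (B i).coord j
      have hg : ∀ y, g y = coordSum (B i) y -
        t / ((1 + t) * (B i).coord j q) * (B i).coord j y := fun y => rfl
      rw [← hg, linearMap_apply_eq_sum (B k) g]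
      refine le_trans (Finset.sum_le_sum fun m _ => ?_) ((coordSum_apply (B k) x).symm.trans_le hk.2)
      rw [hg]
      exact mul_le_of_le_one_right (hk.1 m) (h2 k m j)
    · refine ⟨fun k hk => ?_, ((mem_image_bump hq hq1 ht).1 hx).2⟩
      obtain ⟨y, hy, rfl⟩ := hx
      rw [mem_cornerSimplex] at hy
      rw [bump_apply, map_add, map_smul, smul_eq_mul]
      have := hB.coordSum_le (k := k) hy.1
      nlinarith [h1 k hk, hy.2]
  · rintro ⟨hx1, hx2⟩
    rcases le_total (coordSum (B i) x) 1 with h | h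
    · left
      refine (hB.mem_iff x).2 fun k => ?_
      rcases eq_or_ne k i with rfl | hk
      · exact h
      · exact hx1 k hk
    · exact Or.inr ((mem_image_bump hq hq1 ht).2 ⟨h, hx2⟩)

lemma convex_union_bump (hB : IsFacetSystem P B) {i : ι} {q : Euc d}
    (hq : ∀ j, 0 < (B i).coord j q) (hq1 : coordSum (B i) q = 1) {t : ℝ} (ht : 0 < t)
    (h1 : ∀ k, k ≠ i → (1 + t) * coordSum (B k) q ≤ 1)
    (h2 : ∀ k m j, coordSum (B i) (B k m) -
      t / ((1 + t) * (B i).coord j q) * (B i).coord j (B k m) ≤ 1) :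
    Convex ℝ (P ∪ bump (B i) q t '' cornerSimplex (B i)) := by
  rw [hB.union_bump_eq hq hq1 ht h1 h2]
  have e : {x | (∀ k, k ≠ i → coordSum (B k) x ≤ 1) ∧
      ∀ j, coordSum (B i) x - t / ((1 + t) * (B i).coord j q) * (B i).coord j x ≤ 1} =
      (⋂ (k) (_ : k ≠ i), {x | coordSum (B k) x ≤ 1}) ∩ ⋂ j, {x | (coordSum (B i) -
        (t / ((1 + t) * (B i).coord j q)) • (B i).coord j) x ≤ 1} := by
    ext x
    simp
  rw [e]
  exact (convex_iInter₂ fun k _ => convex_halfSpace_le (coordSum (B k)).isLinear 1).inter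
    (convex_iInter fun j => convex_halfSpace_le (LinearMap.isLinear _) 1)

lemma setIntegral_union_bump (hB : IsFacetSystem P B) (hP : IsCompact P) {i : ι} {q : Euc d}
    (hq : ∀ j, 0 < (B i).coord j q) (hq1 : coordSum (B i) q = 1) {t : ℝ} (ht : 0 < t)
    {φ : Euc d → ℝ} (hφ : Continuous φ) :
    ∫ x in P ∪ bump (B i) q t '' cornerSimplex (B i), φ x =
      (∫ x in P, φ x) + t * ∫ y in cornerSimplex (B i), φ (bump (B i) q t y) := by
  have hc : IsCompact (bump (B i) q t '' cornerSimplex (B i)) :=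
    (isCompact_cornerSimplex _).image (continuous_affineShear _ _ _)
  have hdisj : AEDisjoint volume P (bump (B i) q t '' cornerSimplex (B i)) := by
    refine measure_mono_null ?_ (volume_setOf_eq_eq_zero (coordSum_ne_zero hq1) 1)
    rintro x ⟨hx1, hx2⟩
    exact le_antisymm ((hB.mem_iff x).1 hx1 i) ((mem_image_bump hq hq1 ht).1 hx2).1
  have hdet : 1 + (-(1 + t) • coordSum (B i)) q = -t := by
    rw [LinearMap.smul_apply, hq1, smul_eq_mul]
    ring
  rw [setIntegral_union₀ hdisj hc.measurableSet.nullMeasurableSet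
    (hφ.continuousOn.integrableOn_compact hP) (hφ.continuousOn.integrableOn_compact hc)]
  congr 1
  refine (setIntegral_image_affineShear _ _ _ (by rw [hdet]; exact neg_ne_zero.2 ht.ne')
    (isCompact_cornerSimplex _).measurableSet φ).trans ?_
  rw [hdet, abs_neg, abs_of_pos ht]
  rfl

lemma hausdorffDist_union_bump_le (hB : IsFacetSystem P B) {i : ι} {q : Euc d}
    (hq : ∀ j, 0 < (B i).coord j q) (hq1 : coordSum (B i) q = 1) {t : ℝ} (ht : 0 < t) :
    Metric.hausdorffDist (P ∪ bump (B i) q t '' cornerSimplex (B i)) P ≤ t * ‖q‖ := by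
  have h0 : 0 ≤ t * ‖q‖ := by positivity
  refine Metric.hausdorffDist_le_of_mem_dist h0 ?_ fun x hx => ⟨x, Or.inl hx, by simpa using h0⟩
  rintro x (hx | ⟨y, hy, rfl⟩)
  · exact ⟨x, hx, by simpa using h0⟩
  · have hy' := mem_cornerSimplex.1 hy
    refine ⟨y + (1 - coordSum (B i) y) • q, hB.cornerSimplex_subset i (mem_cornerSimplex.2
      ⟨fun j => ?_, ?_⟩), ?_⟩
    · rw [map_add, map_smul, smul_eq_mul]
      have := mul_nonneg (sub_nonneg.2 hy'.2) (hq j).le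
      linarith [hy'.1 j]
    · rw [map_add, map_smul, hq1, smul_eq_mul]
      linarith
    · rw [bump_apply, dist_eq_norm]
      have : y + ((1 + t) * (1 - coordSum (B i) y)) • q - (y + (1 - coordSum (B i) y) • q) =
          (t * (1 - coordSum (B i) y)) • q := by module
      rw [this, norm_smul, Real.norm_eq_abs,
        abs_of_nonneg (mul_nonneg ht.le (sub_nonneg.2 hy'.2))]
      have h3 : 0 ≤ coordSum (B i) y := by
        rw [coordSum_apply]
        exact Finset.sum_nonneg fun j _ => hy'.1 j
      exact mul_le_mul_of_nonneg_right (by nlinarith) (norm_nonneg _)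

lemma eventually_convex_union_bump (hB : IsFacetSystem P B) [Finite ι] {i : ι} {q : Euc d}
    (hq : ∀ j, 0 < (B i).coord j q) (hq1 : coordSum (B i) q = 1) :
    ∀ᶠ t in nhdsWithin (0 : ℝ) (Set.Ioi 0),
      Convex ℝ (P ∪ bump (B i) q t '' cornerSimplex (B i)) := by
  have e1 : ∀ᶠ t in nhdsWithin (0 : ℝ) (Set.Ioi 0),
      ∀ k, k ≠ i → (1 + t) * coordSum (B k) q ≤ 1 := by
    refine Filter.eventually_all.2 fun k => ?_
    by_cases hk : k = i
    · exact Filter.Eventually.of_forall fun t h => absurd hk h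
    have hlt : coordSum (B k) q < 1 := by
      rw [← hq1]
      exact not_le.1 fun h => hk (hB.eq_of_forall_pos hq h).symm
    have hc : Continuous fun t : ℝ => (1 + t) * coordSum (B k) q := by fun_prop
    have := (hc.tendsto 0).eventually_lt_const (u := 1) (by simpa using hlt)
    exact (this.filter_mono nhdsWithin_le_nhds).mono fun t ht _ => ht.le
  have e2 : ∀ᶠ t in nhdsWithin (0 : ℝ) (Set.Ioi 0), ∀ k m j, coordSum (B i) (B k m) -
      t / ((1 + t) * (B i).coord j q) * (B i).coord j (B k m) ≤ 1 := by
    refine Filter.eventually_all.2 fun k => Filter.eventually_all.2 fun m =>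
      Filter.eventually_all.2 fun j => ?_
    have hqj := hq j
    rcases ((hB.mem_iff _).1 (hB.basis_mem k m) i).lt_or_eq with h | h
    · have hc : ContinuousAt (fun t : ℝ => coordSum (B i) (B k m) -
          t / ((1 + t) * (B i).coord j q) * (B i).coord j (B k m)) 0 := by
        have hne : (1 + (0 : ℝ)) * (B i).coord j q ≠ 0 := by simpa using hqj.ne'
        have h1 : ContinuousAt (fun t : ℝ => (1 + t) * (B i).coord j q) 0 := by fun_prop
        exact continuousAt_const.sub ((continuousAt_id.div h1 hne).mul continuousAt_const)
      have := hc.tendsto.eventually_lt_const (u := 1) (by simpa using h)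
      exact (this.filter_mono nhdsWithin_le_nhds).mono fun t ht => ht.le
    · obtain ⟨p, hp⟩ := hB.face i k m h
      filter_upwards [self_mem_nhdsWithin] with t ht
      have ht : (0 : ℝ) < t := ht
      have h0 : 0 ≤ (B i).coord j (B k m) := by
        rw [← hp]
        classical
        simp only [Module.Basis.coord_apply, Module.Basis.repr_self, Finsupp.single_apply]
        split_ifs <;> norm_num
      have : 0 ≤ t / ((1 + t) * (B i).coord j q) * (B i).coord j (B k m) := by positivity
      linarith
  filter_upwards [e1, e2, self_mem_nhdsWithin] with t h1 h2 ht
  exact hB.convex_union_bump hq hq1 ht h1 h2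

/-- The first-order condition obtained by adding a bump with apex above `q`. -/
lemma first_variation_interior (hB : IsFacetSystem P B) [Finite ι] (hd : 2 ≤ d)
    (hP : IsConvexBody P) {σ : ℝ}
    (hσ : ∀ (D : Set (Euc d)) (T : ℝ → Euc d → Euc d) (K : ℝ → Set (Euc d)),
      IsCompact D → Continuous (Function.uncurry T) →
      (∀ᶠ t in nhdsWithin (0 : ℝ) (Set.Ioi 0), IsConvexBody (K t) ∧
        ∀ φ : Euc d → ℝ, Continuous φ →
          ∫ x in K t, φ x = (∫ x in P, φ x) + t * ∫ y in D, φ (T t y)) →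
      (∀ ε > 0, ∀ᶠ t in nhdsWithin (0 : ℝ) (Set.Ioi 0), Metric.hausdorffDist (K t) P < ε) →
      σ * ((∫ y in D, ‖T 0 y‖ ^ 2) - (d + 2) * volume.real D) ≤ 0)
    (i : ι) {q : Euc d} (hq : ∀ j, 0 < (B i).coord j q) (hq1 : coordSum (B i) q = 1) :
    σ * (‖∑ j, B i j + q‖ ^ 2 + (∑ j, ‖B i j‖ ^ 2 + ‖q‖ ^ 2) - (d + 1) * (d + 2) ^ 2) ≤ 0 := by
  have h := hσ (cornerSimplex (B i)) (bump (B i) q)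
    (fun t => P ∪ bump (B i) q t '' cornerSimplex (B i)) (isCompact_cornerSimplex _)
    (continuous_uncurry_bump _ _) ?_ ?_
  · obtain ⟨β, hβ, hvol, hmom⟩ := exists_simplex_moments hd (B i)
    have e : ∀ y, bump (B i) q 0 y = y + (1 - coordSum (B i) y) • q := fun y => by
      rw [bump_apply, add_zero, one_mul]
    simp only [e] at h
    rw [hmom, hvol] at h
    by_contra! hcon
    have := mul_pos hβ hcon
    nlinarith
  · filter_upwards [hB.eventually_convex_union_bump hq hq1, self_mem_nhdsWithin] with t hconv ht
    exact ⟨⟨hP.1.union ((isCompact_cornerSimplex _).image (continuous_affineShear _ _ _)), hconv,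
      hP.2.2.mono (interior_mono Set.subset_union_left)⟩,
      fun φ hφ => hB.setIntegral_union_bump hP.1 hq hq1 ht hφ⟩
  · intro ε hε
    have hc : Continuous fun t : ℝ => t * ‖q‖ := by fun_prop
    have := ((hc.tendsto 0).eventually_lt_const (u := ε) (by simpa using hε)).filter_mono
      (nhdsWithin_le_nhds (s := Set.Ioi (0 : ℝ)))
    filter_upwards [this, self_mem_nhdsWithin] with t h1 ht
    exact (hB.hausdorffDist_union_bump_le hq hq1 ht).trans_lt h1

lemma first_variation_vertex {σ : ℝ} {i : ι} (h : ∀ q : Euc d,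
      (∀ j, 0 < (B i).coord j q) → coordSum (B i) q = 1 →
      σ * (‖∑ j, B i j + q‖ ^ 2 + (∑ j, ‖B i j‖ ^ 2 + ‖q‖ ^ 2) - (d + 1) * (d + 2) ^ 2) ≤ 0)
    (m : Fin d) :
    σ * (‖∑ j, B i j + B i m‖ ^ 2 + (∑ j, ‖B i j‖ ^ 2 + ‖B i m‖ ^ 2) -
      (d + 1) * (d + 2) ^ 2) ≤ 0 := by
  let p : ℝ → Euc d := fun ε => (1 - d * ε) • B i m + ε • ∑ j, B i j
  have hc : Continuous fun ε => σ * (‖∑ j, B i j + p ε‖ ^ 2 +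
      (∑ j, ‖B i j‖ ^ 2 + ‖p ε‖ ^ 2) - (d + 1) * (d + 2) ^ 2) := by fun_prop
  have ht := (hc.tendsto 0).mono_left (nhdsWithin_le_nhds (s := Set.Ioi (0 : ℝ)))
  have hp0 : p 0 = B i m := by simp [p]
  rw [hp0] at ht
  have hlt : ∀ᶠ ε : ℝ in nhdsWithin 0 (Set.Ioi 0), (d : ℝ) * ε < 1 :=
    (((continuous_const_mul (d : ℝ)).tendsto 0).eventually_lt_const (by simp)).filter_mono
      nhdsWithin_le_nhds
  refine le_of_tendsto ht ?_
  filter_upwards [hlt, self_mem_nhdsWithin] with ε h1 h2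
  have h2 : (0 : ℝ) < ε := h2
  refine h _ (fun j => ?_) ?_
  · have e : (B i).coord j (p ε) = (1 - d * ε) * (if m = j then 1 else 0) + ε := by
      simp [p, Finsupp.single_apply]
      split_ifs <;> ring
    rw [e]
    split_ifs <;> linarith
  · simp only [p, map_add, map_smul, map_sum, coordSum_basis]
    simp
    ring

lemma aedisjoint_cornerSimplex (hB : IsFacetSystem P B) {i k : ι} (hik : i ≠ k) :
    AEDisjoint volume (cornerSimplex (B i)) (cornerSimplex (B k)) := by
  have hne : ∀ j, (B i).coord j ≠ 0 := fun j h => by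
    have := congrArg (fun f => f (B i j)) h
    simp at this
  refine measure_mono_null ?_ (measure_iUnion_null fun j => volume_setOf_eq_eq_zero (hne j) 0)
  rintro x ⟨hx1, hx2⟩
  rw [mem_cornerSimplex] at hx1 hx2
  by_contra hcon
  refine hik (hB.eq_of_forall_pos (fun j => (hx1.1 j).lt_of_ne fun h0 => ?_)
    (hB.coordSum_le hx2.1))
  exact hcon (Set.mem_iUnion.2 ⟨j, h0.symm⟩)

lemma setIntegral_eq_sum [Fintype ι] (hB : IsFacetSystem P B) {φ : Euc d → ℝ}
    (hφ : Continuous φ) (hP : IsCompact P) :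
    ∫ x in P, φ x = ∑ i, ∫ x in cornerSimplex (B i), φ x := by
  have e : P = ⋃ i, cornerSimplex (B i) := Set.Subset.antisymm
    (fun x hx => Set.mem_iUnion.2 (hB.mem_cornerSimplex_of_mem hx))
    (Set.iUnion_subset hB.cornerSimplex_subset)
  have hint := hφ.continuousOn.integrableOn_compact (μ := volume) hP
  rw [e] at hint ⊢
  rw [integral_iUnion_ae
    (fun i => (isCompact_cornerSimplex (B i)).measurableSet.nullMeasurableSet)
    (fun i k hik => hB.aedisjoint_cornerSimplex hik) hint, tsum_fintype]

/-- At a local extremum of the isotropic constant, every vertex of every facet satisfies the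
critical equation. -/
lemma inner_basis_eq (hB : IsFacetSystem P B) [Finite ι] (hd : 2 ≤ d) (hP : IsConvexBody P)
    (hiso : IsIsotropic P) (hext : IsLocalExtremumOfIsoConst P) (i : ι) (m : Fin d) :
    ⟪B i m, B i m + ∑ j, B i j⟫ = ((d : ℝ) + 1) * (d + 2) := by
  have := Fintype.ofFinite ι
  have hPV : 0 < volume.real P := by
    refine ENNReal.toReal_pos ?_ hP.1.measure_lt_top.ne
    exact (Measure.measure_pos_of_nonempty_interior _ hP.2.2).ne'
  obtain ⟨σ, hσ0, hσ⟩ := exists_sign_first_variation hd hP.1 hPV hiso hext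
  have hv := fun i m => first_variation_vertex
    (fun q => hB.first_variation_interior hd hP hσ i (q := q)) m
  let N : ι → ℝ := fun i => ‖∑ j, B i j‖ ^ 2 + ∑ j, ‖B i j‖ ^ 2
  have hterm : ∀ i m, ‖∑ j, B i j + B i m‖ ^ 2 + (∑ j, ‖B i j‖ ^ 2 + ‖B i m‖ ^ 2) =
      N i + 2 * ⟪B i m, B i m + ∑ j, B i j⟫ := by
    intro i m
    rw [norm_add_sq_real, inner_add_right, real_inner_self_eq_norm_sq,
      real_inner_comm (∑ j, B i j) (B i m)]
    simp only [N]
    ring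
  simp_rw [hterm] at hv
  have hinner : ∀ i, ∑ m, ⟪B i m, B i m + ∑ j, B i j⟫ = N i := by
    intro i
    simp_rw [inner_add_right, real_inner_self_eq_norm_sq, sum_add_distrib]
    rw [← sum_inner, real_inner_self_eq_norm_sq, add_comm]
  have hsum : ∀ i, ∑ m : Fin d, (N i + 2 * ⟪B i m, B i m + ∑ j, B i j⟫ - (d + 1) * (d + 2) ^ 2) =
      (d + 2) * (N i - d * ((d + 1) * (d + 2))) := by
    intro i
    rw [sum_sub_distrib, sum_add_distrib, ← mul_sum, hinner]
    simp
    ring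
  have hN : ∀ i, σ * (N i - d * ((d + 1) * (d + 2))) ≤ 0 := by
    intro i
    have h := Finset.sum_nonpos fun m (_ : m ∈ univ) => hv i m
    rw [← mul_sum, hsum] at h
    have hd0 : (0 : ℝ) < d + 2 := by positivity
    by_contra! hcon
    nlinarith [mul_pos hd0 hcon]
  choose β hβ hvol hmom using fun i => exists_simplex_moments hd (B i)
  have htotal : ∑ i, β i * (σ * (N i - d * ((d + 1) * (d + 2)))) = 0 := by
    have h1 := hiso.setIntegral_norm_sq hP.1 hPV
    have h2 := hB.setIntegral_eq_sum (φ := fun x => ‖x‖ ^ 2) (by fun_prop) hP.1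
    have h3 := hB.setIntegral_eq_sum (φ := fun _ => (1 : ℝ)) continuous_const hP.1
    have h4 : ∀ i, ∫ x in cornerSimplex (B i), ‖x‖ ^ 2 = β i * N i := by
      intro i
      have := hmom i 0
      simpa [N] using this
    simp only [integral_const, MeasurableSet.univ, measureReal_restrict_apply, Set.univ_inter,
      smul_eq_mul, mul_one, hvol] at h3
    simp_rw [h4] at h2
    have h5 : ∑ i, β i * (σ * (N i - d * ((d + 1) * (d + 2)))) =
        σ * (∑ i, β i * N i - d * ∑ i, β i * ((d + 1) * (d + 2))) := by
      rw [mul_sum, ← sum_sub_distrib, mul_sum]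
      exact Finset.sum_congr rfl fun i _ => by ring
    rw [h5, ← h2, ← h3, h1]
    ring
  have hNi : N i = d * ((d + 1) * (d + 2)) := by
    have h := (Finset.sum_eq_zero_iff_of_nonpos fun i _ =>
      mul_nonpos_of_nonneg_of_nonpos (hβ i).le (hN i)).1 htotal i (mem_univ i)
    have h2 := (mul_eq_zero.1 ((mul_eq_zero.1 h).resolve_left (hβ i).ne')).resolve_left hσ0
    linarith
  have h0 : ∑ m : Fin d, σ * (N i + 2 * ⟪B i m, B i m + ∑ j, B i j⟫ - (d + 1) * (d + 2) ^ 2) = 0 := by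
    rw [← mul_sum, hsum, hNi]
    ring
  have h := (mul_eq_zero.1 ((Finset.sum_eq_zero_iff_of_nonpos fun m _ => hv i m).1 h0 m
    (mem_univ m))).resolve_left hσ0
  rw [hNi] at h
  linarith

end IsFacetSystem

lemma zero_mem_interior_of_centroid_eq_zero {d : ℕ} {P : Set (Euc d)} (hP : IsConvexBody P)
    (h : centroid P = 0) : (0 : Euc d) ∈ interior P := by
  by_contra h0
  obtain ⟨f, hf⟩ := geometric_hahn_banach_open_point hP.2.1.interior isOpen_interior h0
  simp only [map_zero] at hf
  have hvol : 0 < volume (interior P) := isOpen_interior.measure_pos volume hP.2.2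
  have hle : ∀ x ∈ P, f x ≤ 0 := by
    have : P ⊆ {x | f x ≤ 0} := by
      refine subset_closure.trans ?_
      rw [← hP.2.1.closure_interior_eq_closure_of_nonempty_interior hP.2.2]
      exact closure_minimal (fun x hx => (hf x hx).le)
        (isClosed_le f.continuous continuous_const)
    exact this
  have hPV : volume.real P ≠ 0 :=
    (ENNReal.toReal_pos (Measure.measure_pos_of_nonempty_interior _ hP.2.2).ne'
      hP.1.measure_lt_top.ne).ne'
  have hint : ∫ x in P, x = 0 := by
    rcases smul_eq_zero.1 h with h1 | h1
    · exact absurd (inv_eq_zero.1 h1) hPV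
    · exact h1
  have hcomm := f.integral_comp_comm (μ := volume.restrict P) (φ := fun x : Euc d => x)
    (continuous_id.continuousOn.integrableOn_compact hP.1)
  rw [hint, map_zero] at hcomm
  have hneg : ∫ x in P, -f x = 0 := by rw [integral_neg, hcomm, neg_zero]
  have hae := (setIntegral_eq_zero_iff_of_nonneg_ae
    ((ae_restrict_iff' hP.1.measurableSet).2 (Filter.Eventually.of_forall fun x hx => by
      simpa using hle x hx))
    (f.continuous.neg.continuousOn.integrableOn_compact hP.1)).1 hneg
  have hnull : volume (interior P) = 0 := by
    have h2 := (ae_restrict_iff' hP.1.measurableSet).1 hae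
    refine measure_mono_null (fun x hx => ?_) (ae_iff.1 h2)
    have h3 := hf x hx
    simp only [Set.mem_ofPred_eq, Pi.neg_apply, Pi.zero_apply, neg_eq_zero]
    exact fun h4 => absurd (h4 (interior_subset hx)) h3.ne
  exact hvol.ne' hnull

lemma eq_zero_of_forall_le_zero {d : ℕ} {P : Set (Euc d)} (h0 : (0 : Euc d) ∈ interior P)
    {f : Euc d →L[ℝ] ℝ} (hf : ∀ x ∈ P, f x ≤ 0) : f = 0 := by
  have hloc : IsLocalMax f 0 := by
    filter_upwards [mem_interior_iff_mem_nhds.1 h0] with x hx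
    simpa using hf x hx
  have := hloc.fderiv_eq_zero
  rwa [f.fderiv] at this

lemma mem_convexHull_range_basis {d : ℕ} {b : Module.Basis (Fin d) ℝ (Euc d)} {x : Euc d}
    (hx : x ∈ convexHull ℝ (Set.range b)) (j : Fin d) : 0 ≤ b.coord j x := by
  have : convexHull ℝ (Set.range b) ⊆ {x | 0 ≤ b.coord j x} := by
    refine convexHull_min ?_ (convex_halfSpace_ge (LinearMap.isLinear _) 0)
    rintro _ ⟨m, rfl⟩
    classical
    simp only [Set.mem_ofPred_eq, Module.Basis.coord_apply, Module.Basis.repr_self,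
      Finsupp.single_apply]
    split_ifs <;> norm_num
  exact this hx

/-- The vertices of a simplicial facet form a basis, in which the facet is cut out by the sum of
the coordinates. -/
lemma IsFacetOf.exists_basis {d : ℕ} (hd : 2 ≤ d) {P F : Set (Euc d)}
    (h0 : (0 : Euc d) ∈ interior P) (hdim : sdim P = d) (hF : IsFacetOf d P F)
    (hs : IsSimplexWith d F) : ∃ b : Module.Basis (Fin d) ℝ (Euc d),
      F = convexHull ℝ (Set.range b) ∧ (∀ x ∈ P, coordSum b x ≤ 1) ∧
      F = {x ∈ P | coordSum b x = 1} := by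
  obtain ⟨w, hw, hFw⟩ := hs
  have hwF : ∀ j, w j ∈ F := fun j => hFw ▸ subset_convexHull ℝ _ (Set.mem_range_self j)
  let j₀ : Fin d := ⟨0, by omega⟩
  obtain ⟨l, hl⟩ := hF.1 ⟨w j₀, hwF j₀⟩
  have hmem : ∀ x, x ∈ F ↔ x ∈ P ∧ ∀ y ∈ P, l y ≤ l x := fun x => by rw [hl]; rfl
  have hle : ∀ y ∈ P, l y ≤ l (w j₀) := ((hmem _).1 (hwF j₀)).2
  have heq : ∀ j, l (w j) = l (w j₀) := fun j =>
    le_antisymm (hle _ ((hmem _).1 (hwF j)).1) (((hmem _).1 (hwF j)).2 _ ((hmem _).1 (hwF j₀)).1)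
  have hc : 0 < l (w j₀) := by
    have h1 := hle 0 (interior_subset h0)
    rw [map_zero] at h1
    refine h1.lt_of_ne fun h2 => ?_
    rw [← h2] at hle
    have hl0 := eq_zero_of_forall_le_zero h0 hle
    have hFP : F = P := by
      ext x
      simp [hmem, hl0]
    have := hF.2
    rw [hFP, hdim] at this
    omega
  have hli : LinearIndependent ℝ w := by
    rw [Fintype.linearIndependent_iff]
    intro g hg j
    have hsum : ∑ j, g j = 0 := by
      have h1 := congrArg l hg
      simp only [map_sum, map_smul, heq, smul_eq_mul, map_zero, ← sum_mul] at h1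
      exact (mul_eq_zero.1 h1).resolve_right hc.ne'
    exact affineIndependent_iff.1 hw univ g hsum hg j (mem_univ j)
  have : Nonempty (Fin d) := ⟨j₀⟩
  let b := basisOfLinearIndependentOfCardEqFinrank hli (by simp)
  have hb : ⇑b = w := coe_basisOfLinearIndependentOfCardEqFinrank hli _
  have hsum : ∀ x, l x = l (w j₀) * coordSum b x := by
    intro x
    rw [coordSum_apply, mul_sum, ← ContinuousLinearMap.coe_coe, linearMap_apply_eq_sum b]
    refine Finset.sum_congr rfl fun j _ => ?_
    rw [hb, ContinuousLinearMap.coe_coe, heq, mul_comm]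
  have hle1 : ∀ x ∈ P, coordSum b x ≤ 1 := fun x hx => by
    have := hle x hx
    rw [hsum x] at this
    exact (mul_le_iff_le_one_right hc).1 this
  refine ⟨b, by rw [hb, hFw], hle1, ?_⟩
  ext x
  rw [hmem]
  refine and_congr_right fun hx => ⟨fun h => le_antisymm (hle1 x hx) ?_, fun h y hy => ?_⟩
  · have := h _ ((hmem _).1 (hwF j₀)).1
    rw [hsum x] at this
    exact (le_mul_iff_one_le_right hc).1 this
  · rw [hsum x, h, mul_one]
    exact hle y hy

/-- The polar of a set. -/
def polarSet {d : ℕ} (S : Set (Euc d)) : Set (Euc d) := {y | ∀ s ∈ S, ⟪s, y⟫ ≤ 1}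

lemma inner_le_one_of_mem_polarSet {d : ℕ} {S : Set (Euc d)} {y : Euc d} (hy : y ∈ polarSet S)
    {x : Euc d} (hx : x ∈ convexHull ℝ S) : ⟪x, y⟫ ≤ 1 := by
  have : convexHull ℝ S ⊆ {x | ⟪x, y⟫ ≤ 1} := by
    refine convexHull_min hy ?_
    have h := convex_halfSpace_le (innerₛₗ ℝ y).isLinear 1
    simpa only [innerₛₗ_apply_apply, real_inner_comm y] using h
  exact this hx

lemma isCompact_polarSet {d : ℕ} {S : Set (Euc d)}
    (h0 : (0 : Euc d) ∈ interior (convexHull ℝ S)) : IsCompact (polarSet S) := by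
  obtain ⟨r, hr, hball⟩ := Metric.nhds_basis_closedBall.mem_iff.1 (mem_interior_iff_mem_nhds.1 h0)
  refine (isCompact_closedBall (0 : Euc d) r⁻¹).of_isClosed_subset ?_ fun y hy => ?_
  · simp only [polarSet, Set.ofPred_forall]
    exact isClosed_iInter fun s => isClosed_iInter fun _ =>
      isClosed_le (continuous_const.inner continuous_id) continuous_const
  · rw [mem_closedBall_zero_iff]
    rcases eq_or_ne y 0 with rfl | hy0
    · simpa using hr.le
    have hn : 0 < ‖y‖ := norm_pos_iff.2 hy0
    have hmem : (r / ‖y‖) • y ∈ convexHull ℝ S := by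
      refine hball (mem_closedBall_zero_iff.2 ?_)
      rw [norm_smul, Real.norm_of_nonneg (by positivity), div_mul_cancel₀ _ hn.ne']
    have h1 := inner_le_one_of_mem_polarSet hy hmem
    rw [real_inner_smul_left, real_inner_self_eq_norm_sq] at h1
    have h2 : r / ‖y‖ * ‖y‖ ^ 2 = r * ‖y‖ := by field_simp
    rw [h2] at h1
    rw [le_inv_comm₀ hn hr, ← one_div, le_div_iff₀ hn]
    exact h1

/-- At an extreme point of the polar of a finite set, the active constraints span. -/
lemma span_active_eq_top {d : ℕ} {S : Set (Euc d)} (hS : S.Finite) {y : Euc d}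
    (hy : y ∈ (polarSet S).extremePoints ℝ) : Submodule.span ℝ {s ∈ S | ⟪s, y⟫ = 1} = ⊤ := by
  rw [← Submodule.orthogonal_eq_bot_iff, Submodule.eq_bot_iff]
  intro u hu
  have hu' : ∀ s ∈ S, ⟪s, y⟫ = 1 → ⟪s, u⟫ = 0 := fun s hs h1 =>
    (Submodule.mem_orthogonal _ _).1 hu s (Submodule.subset_span ⟨hs, h1⟩)
  have hev : ∀ᶠ ε in nhdsWithin (0 : ℝ) (Set.Ioi 0),
      ∀ s ∈ S, ⟪s, y + ε • u⟫ ≤ 1 ∧ ⟪s, y - ε • u⟫ ≤ 1 := by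
    refine (Filter.eventually_all_finite hS).2 fun s hs => ?_
    simp only [inner_add_right, inner_sub_right, inner_smul_right]
    rcases (hy.1 s hs).lt_or_eq with h | h
    · have hc1 : Continuous fun ε : ℝ => ⟪s, y⟫ + ε * ⟪s, u⟫ := by fun_prop
      have hc2 : Continuous fun ε : ℝ => ⟪s, y⟫ - ε * ⟪s, u⟫ := by fun_prop
      have h1 := (hc1.tendsto 0).eventually_lt_const (u := 1) (by simpa using h)
      have h2 := (hc2.tendsto 0).eventually_lt_const (u := 1) (by simpa using h)
      filter_upwards [h1.filter_mono nhdsWithin_le_nhds, h2.filter_mono nhdsWithin_le_nhds]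
        with ε h3 h4
      exact ⟨h3.le, h4.le⟩
    · refine Filter.Eventually.of_forall fun ε => ?_
      simp [hu' s hs h, h]
  obtain ⟨ε, hε, hε0⟩ := (hev.and self_mem_nhdsWithin).exists
  have hε0 : (0 : ℝ) < ε := hε0
  have hseg : y ∈ openSegment ℝ (y + ε • u) (y - ε • u) :=
    ⟨1 / 2, 1 / 2, by norm_num, by norm_num, by norm_num, by module⟩
  have h := hy.2 (fun s hs => (hε s hs).1) (fun s hs => (hε s hs).2) hseg
  have h2 : ε • u = 0 := by simpa using h
  exact (smul_eq_zero.1 h2).resolve_left hε0.ne'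

lemma sdim_eq_of_span_eq_top {d : ℕ} {F : Set (Euc d)} {y : Euc d} (hF : F.Nonempty)
    (hy : ∀ x ∈ F, ⟪y, x⟫ = 1) (hspan : Submodule.span ℝ F = ⊤) : sdim F = d - 1 := by
  obtain ⟨a, ha⟩ := hF
  rw [sdim, direction_affineSpan]
  have hle : vectorSpan ℝ F ≤ (Submodule.span ℝ {y})ᗮ := by
    refine Submodule.span_le.2 ?_
    rintro _ ⟨p, hp, q, hq, rfl⟩
    rw [SetLike.mem_coe, Submodule.mem_orthogonal_singleton_iff_inner_right]
    beta_reduce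
    rw [vsub_eq_sub, inner_sub_right, hy p hp, hy q hq, sub_self]
  have hy0 : y ≠ 0 := by
    rintro rfl
    simpa using hy a ha
  have h1 := Submodule.finrank_mono hle
  have h2 := Submodule.finrank_add_finrank_orthogonal (Submodule.span ℝ {y})
  rw [finrank_span_singleton hy0, finrank_euclideanSpace_fin] at h2
  have h3 : (⊤ : Submodule ℝ (Euc d)) ≤ vectorSpan ℝ F ⊔ Submodule.span ℝ {a} := by
    rw [← hspan, Submodule.span_le]
    intro x hx
    have : x = (x -ᵥ a) + a := by simp
    rw [this]
    exact Submodule.add_mem_sup (vsub_mem_vectorSpan ℝ hx ha) (Submodule.mem_span_singleton_self a)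
  have h4 := Submodule.finrank_mono h3
  have h5 := Submodule.finrank_add_le_finrank_add_finrank (vectorSpan ℝ F) (Submodule.span ℝ {a})
  have ha0 : a ≠ 0 := by
    rintro rfl
    simpa using hy 0 ha
  rw [finrank_span_singleton ha0] at h5
  rw [finrank_top, finrank_euclideanSpace_fin] at h4
  omega

/-- Every ray from the interior point `0` meets a facet. -/
lemma exists_facet_mem_ray {d : ℕ} (hd : 0 < d) {S : Set (Euc d)} (hS : S.Finite)
    (h0 : (0 : Euc d) ∈ interior (convexHull ℝ S)) (x : Euc d) :
    ∃ F, IsFacetOf d (convexHull ℝ S) F ∧ ∃ M : ℝ, 0 ≤ M ∧ ∃ z ∈ F, x = M • z := by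
  have hQ := isCompact_polarSet h0
  have h0Q : (0 : Euc d) ∈ polarSet S := fun s _ => by simp
  let G := (innerSL ℝ x).toExposed (polarSet S)
  have hGexp : IsExposed ℝ (polarSet S) G := ContinuousLinearMap.toExposed.isExposed
  have hGne : G.Nonempty := by
    obtain ⟨z, hz, hmax⟩ := hQ.exists_isMaxOn ⟨0, h0Q⟩ (innerSL ℝ x).continuous.continuousOn
    exact ⟨z, hz, hmax⟩
  obtain ⟨y, hy⟩ := (hGexp.isCompact hQ).extremePoints_nonempty hGne
  have hyQ := hGexp.isExtreme.extremePoints_subset_extremePoints hy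
  have hmax : ∀ z ∈ polarSet S, ⟪x, z⟫ ≤ ⟪x, y⟫ := hy.1.2
  have hspan := span_active_eq_top hS hyQ
  let F : Set (Euc d) := {z ∈ convexHull ℝ S | ⟪y, z⟫ = 1}
  have hsub : {s ∈ S | ⟪s, y⟫ = 1} ⊆ F := fun s hs =>
    ⟨subset_convexHull ℝ S hs.1, by rw [real_inner_comm]; exact hs.2⟩
  have hspanF : Submodule.span ℝ F = ⊤ := top_le_iff.1 (hspan ▸ Submodule.span_mono hsub)
  have hFne : F.Nonempty := by
    by_contra hne
    rw [Set.not_nonempty_iff_eq_empty.1 hne, Submodule.span_empty] at hspanF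
    have := congrArg (fun W : Submodule ℝ (Euc d) => Module.finrank ℝ W) hspanF
    simp only [finrank_bot, finrank_top, finrank_euclideanSpace_fin] at this
    omega
  have hle : ∀ z ∈ convexHull ℝ S, ⟪y, z⟫ ≤ 1 := fun z hz => by
    rw [real_inner_comm]
    exact inner_le_one_of_mem_polarSet hyQ.1 hz
  have hFexp : IsExposed ℝ (convexHull ℝ S) F := by
    intro _
    refine ⟨innerSL ℝ y, ?_⟩
    obtain ⟨a, ha, ha1⟩ := hFne
    ext z
    refine and_congr_right fun hz => ⟨fun h w hw => ?_, fun h => le_antisymm (hle z hz) ?_⟩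
    · rw [innerSL_apply_apply, innerSL_apply_apply, h]
      exact hle w hw
    · have := h a ha
      rwa [innerSL_apply_apply, innerSL_apply_apply, ha1] at this
  have hfacet : IsFacetOf d (convexHull ℝ S) F :=
    ⟨hFexp, sdim_eq_of_span_eq_top hFne (fun z hz => hz.2) hspanF⟩
  have hM : 0 ≤ ⟪x, y⟫ := by simpa using hmax 0 h0Q
  refine ⟨F, hfacet, ⟪x, y⟫, hM, ?_⟩
  rcases hM.eq_or_lt with hM0 | hM0
  · refine hFne.imp fun z hz => ⟨hz, ?_⟩
    rw [← hM0, zero_smul]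
    have hev : ∀ᶠ ε in nhdsWithin (0 : ℝ) (Set.Ioi 0), ∀ s ∈ S, ⟪s, ε • x⟫ ≤ 1 := by
      refine (Filter.eventually_all_finite hS).2 fun s _ => ?_
      have hc : Continuous fun ε : ℝ => ⟪s, ε • x⟫ := by fun_prop
      exact (((hc.tendsto 0).eventually_lt_const (u := 1) (by simp)).filter_mono
        nhdsWithin_le_nhds).mono fun ε h => h.le
    obtain ⟨ε, hε, hε0⟩ := (hev.and self_mem_nhdsWithin).exists
    have hε0 : (0 : ℝ) < ε := hε0
    have h1 := hmax _ hε
    rw [← hM0, inner_smul_right, real_inner_self_eq_norm_sq] at h1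
    by_contra hx
    have hx : 0 < ‖x‖ := norm_pos_iff.2 hx
    exact absurd h1 (not_le.2 (by positivity))
  · refine ⟨(⟪x, y⟫)⁻¹ • x, ⟨?_, ?_⟩, (smul_inv_smul₀ hM0.ne' x).symm⟩
    · by_contra hx
      obtain ⟨f, u, hfu, hux⟩ := geometric_hahn_banach_closed_point (convex_convexHull ℝ S)
        (hS.isClosed_convexHull ℝ) hx
      have hu : 0 < u := by simpa using hfu 0 (interior_subset h0)
      let p := (InnerProductSpace.toDual ℝ (Euc d)).symm f
      have hp : ∀ z, ⟪z, u⁻¹ • p⟫ = u⁻¹ * f z := fun z => by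
        rw [inner_smul_right, real_inner_comm, InnerProductSpace.toDual_symm_apply]
      have h1 := hmax (u⁻¹ • p) fun s hs => by
        rw [hp, inv_mul_le_one₀ hu]
        exact (hfu s (subset_convexHull ℝ S hs)).le
      rw [hp] at h1
      rw [map_smul, smul_eq_mul, lt_inv_mul_iff₀ hM0] at hux
      rw [inv_mul_le_iff₀ hu] at h1
      linarith
    · rw [inner_smul_right, real_inner_comm x y, inv_mul_cancel₀ hM0.ne']

/-- A simplicial polytope with the origin in its interior has a facet system. -/
lemma exists_isFacetSystem {d : ℕ} (hd : 2 ≤ d) {P : Set (Euc d)}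
    (h0 : (0 : Euc d) ∈ interior P) (hP : IsSimplicialPolytope d P) :
    ∃ B : {F // IsFacetOf d P F} → Module.Basis (Fin d) ℝ (Euc d),
      IsFacetSystem P B ∧ Finite {F // IsFacetOf d P F} ∧
      ∀ i, i.1 = convexHull ℝ (Set.range (B i)) := by
  obtain ⟨⟨S, hS⟩, hdim, hsimp⟩ := hP
  choose B hhull hle heq using fun i : {F // IsFacetOf d P F} =>
    i.2.exists_basis hd h0 hdim (hsimp i.1 i.2)
  have hmemF : ∀ i j, B i j ∈ i.1 := fun i j => by
    rw [hhull i]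
    exact subset_convexHull ℝ _ (Set.mem_range_self j)
  have hmemP : ∀ i j, B i j ∈ P := fun i j => i.2.1.subset (hmemF i j)
  have hinj : ∀ i k, Set.range (B i) = Set.range (B k) → i = k := fun i k h =>
    Subtype.ext (by rw [hhull i, hhull k, h])
  have hcoord : ∀ i, ∀ z ∈ i.1, ∀ j, 0 ≤ (B i).coord j z := fun i z hz j =>
    mem_convexHull_range_basis (hhull i ▸ hz) j
  have hext : ∀ i j, B i j ∈ P.extremePoints ℝ := by
    intro i j
    refine i.2.1.isExtreme.extremePoints_subset_extremePoints ?_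
    rw [mem_extremePoints_iff_left]
    refine ⟨hmemF i j, ?_⟩
    rintro x hx y hy ⟨a, b, ha, hb, hab, hxy⟩
    have hx1 : coordSum (B i) x = 1 := by
      rw [heq i] at hx
      exact hx.2
    have hzero : ∀ m, m ≠ j → (B i).coord m x = 0 := by
      intro m hm
      have h1 := congrArg ((B i).coord m) hxy
      have h2 := hcoord i x hx m
      have h3 := hcoord i y hy m
      have h4 : (B i).coord m (B i j) = 0 := by simp [hm]
      rw [map_add, map_smul, map_smul, h4, smul_eq_mul, smul_eq_mul] at h1
      have h5 := mul_nonneg ha.le h2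
      have h6 := mul_nonneg hb.le h3
      exact (mul_eq_zero.1 (by linarith : a * (B i).coord m x = 0)).resolve_left ha.ne'
    rw [coordSum_apply, Finset.sum_eq_single j (fun m _ hm => hzero m hm) (by simp)] at hx1
    rw [← sum_coord_smul (B i) x, Finset.sum_eq_single j
      (fun m _ hm => by rw [hzero m hm, zero_smul]) (by simp), hx1, one_smul]
  have hcover : ∀ x, ∃ i, ∀ j, 0 ≤ (B i).coord j x := by
    intro x
    rw [hS] at h0
    obtain ⟨F, hF, M, hM, z, hz, rfl⟩ := exists_facet_mem_ray (by omega) S.finite_toSet h0 x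
    rw [← hS] at hF
    refine ⟨⟨F, hF⟩, fun j => ?_⟩
    rw [map_smul, smul_eq_mul]
    exact mul_nonneg hM (hcoord ⟨F, hF⟩ z hz j)
  have hPconv : Convex ℝ P := hS ▸ convex_convexHull ℝ _
  refine ⟨B, ⟨hcover, fun x => ⟨fun hx i => hle i x hx, fun hx => ?_⟩, hmemP, ?_, hinj⟩, ?_, hhull⟩
  · obtain ⟨i, hi⟩ := hcover x
    have hxi : x ∈ cornerSimplex (B i) := mem_cornerSimplex.2 ⟨hi, hx i⟩
    have h1 := hPconv.sum_mem (t := univ) (w := fun o => bary (B i) o x)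
      (z := fun o => o.elim 0 (B i)) (fun o _ => hxi o) (sum_bary (B i) x) (by
        rintro (_ | j) _
        · exact interior_subset h0
        · exact hmemP i j)
    rw [Fintype.sum_option] at h1
    simpa [bary] using h1
  · intro i k m h
    refine extremePoints_convexHull_subset (𝕜 := ℝ) ?_
    rw [← hhull i]
    exact inter_extremePoints_subset_extremePoints_of_subset i.2.1.subset
      ⟨by rw [heq i]; exact ⟨hmemP k m, h⟩, hext k m⟩
  · have hfin : (𝒫 (S : Set (Euc d))).Finite := S.finite_toSet.finite_subsets
    have := hfin.to_subtype
    refine Finite.of_injective (β := 𝒫 (S : Set (Euc d))) (fun i => ⟨Set.range (B i), ?_⟩)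
      fun i k h => hinj i k (Subtype.ext_iff.1 h)
    rintro _ ⟨j, rfl⟩
    have := hext i j
    rw [hS] at this
    exact extremePoints_convexHull_subset this

lemma IsSimplicialPolytope.two_le {d : ℕ} {P : Set (Euc d)} (hbody : IsConvexBody P)
    (hsimp : IsSimplicialPolytope d P) : 2 ≤ d := by
  by_contra! h
  interval_cases d
  · have hexp : IsFacetOf 0 P P := ⟨IsExposed.refl _, hsimp.2.1⟩
    obtain ⟨w, -, hw⟩ := hsimp.2.2 P hexp
    rw [Set.range_eq_empty, convexHull_empty] at hw
    have := hbody.2.2.mono interior_subset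
    rw [hw] at this
    exact Set.not_nonempty_empty this
  · have hexp : IsFacetOf 1 P ∅ := ⟨fun h => absurd h Set.not_nonempty_empty, by simp [sdim]⟩
    obtain ⟨w, -, hw⟩ := hsimp.2.2 ∅ hexp
    have : w 0 ∈ (∅ : Set (Euc 1)) := hw ▸ subset_convexHull ℝ _ (Set.mem_range_self 0)
    exact this

/-- If `P` is a `d`-dimensional isotropic simplicial polytope that is a local
extremum of the isotropic constant, then `P` is isohedral: for any two facets `F₁`, `F₂` of `P`
there is an isometry of `ℝ^d` mapping `P` onto itself and `F₁` onto `F₂`. -/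
theorem stmt1 {d : ℕ} (P : Set (Euc d)) (hbody : IsConvexBody P)
    (hsimp : IsSimplicialPolytope d P) (hiso : IsIsotropic P)
    (hext : IsLocalExtremumOfIsoConst P)
    (F₁ F₂ : Set (Euc d)) (hF₁ : IsFacetOf d P F₁) (hF₂ : IsFacetOf d P F₂) :
    ∃ φ : Euc d ≃ᵢ Euc d, φ '' P = P ∧ φ '' F₁ = F₂ := by
  have hd : 2 ≤ d := hsimp.two_le hbody
  obtain ⟨B, hB, hfin, hhull⟩ :=
    exists_isFacetSystem hd (zero_mem_interior_of_centroid_eq_zero hbody hiso.1) hsimp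
  obtain ⟨φ, hφP, hφ⟩ := hB.exists_isometry (hB.inner_basis_eq hd hbody hiso hext)
    ⟨F₁, hF₁⟩ ⟨F₂, hF₂⟩
  refine ⟨φ.toIsometryEquiv, hφP, ?_⟩
  have h := φ.toLinearEquiv.toLinearMap.image_convexHull (Set.range (B ⟨F₁, hF₁⟩))
  rw [← hhull ⟨F₁, hF₁⟩] at h
  exact h.trans ((congrArg _ hφ).trans (hhull ⟨F₂, hF₂⟩).symm)

end
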